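/- For every natural number k, let 𝒢_k be the class of graphs that are either (k, k, k, k)-almost-embeddable or of (k, k)-almost bounded degree. There are constants c > 0 and d ∈ (0,1), depending only on k, such that every graph G ∈ TR(𝒢_k) that has a Hamiltonian path and order n has an induced path of order at least c·(log₂ n)^d. -/

import Mathlib

open SimpleGraph Real

/-- `G` has a (not necessarily induced) path on `n` vertices. -/
def HasPathOfOrder {V : Type*} (G : SimpleGraph V) (n : ℕ) : Prop :=
  ∃ (u v : V) (p : G.Walk u v), p.IsPath ∧ p.length + 1 = n

/-- `G` has a Hamiltonian path. -/
def HasHamPath {V : Type*} (G : SimpleGraph V) : Prop :=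
  ∃ (u v : V) (p : G.Walk u v), p.IsPath ∧ ∀ w, w ∈ p.support

/-- `G` has an induced path on at least `r` vertices (an induced subgraph isomorphic to a
path graph on `m ≥ r` vertices). -/
def HasInducedPathGE {V : Type*} (G : SimpleGraph V) (r : ℝ) : Prop :=
  ∃ m : ℕ, r ≤ (m : ℝ) ∧ Nonempty (pathGraph m ↪g G)

/-- A tree (or path) representation of `G` over the graph `T`: every vertex `v` of `G` has a
nonempty connected model `model v ⊆ V(T)`, and models of adjacent vertices intersect. -/
structure TreeRep {V N : Type*} (G : SimpleGraph V) (T : SimpleGraph N) where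
  model : V → Set N
  model_connected : ∀ v, (T.induce (model v)).Connected
  adj_meet : ∀ ⦃u v⦄, G.Adj u v → (model u ∩ model v).Nonempty

namespace TreeRep

variable {V N : Type*} {G : SimpleGraph V} {T : SimpleGraph N}

/-- The bag of the representation at a node `t`. -/
def bag (R : TreeRep G T) (t : N) : Set V := {v | t ∈ R.model v}

/-- The representation has width less than `k`, i.e. all bags have at most `k` vertices. -/
def WidthLT (R : TreeRep G T) (k : ℕ) : Prop := ∀ t, (R.bag t).ncard ≤ k

/-- The representation has width at most `k`, i.e. all bags have at most `k + 1` vertices. -/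
def WidthLE (R : TreeRep G T) (k : ℕ) : Prop := ∀ t, (R.bag t).ncard ≤ k + 1

/-- The weight of a path `p` of `T`: the number of vertices of `G` whose model meets `p`. -/
noncomputable def pathWeight (R : TreeRep G T) {x y : N} (p : T.Walk x y) : ℕ :=
  {v : V | ∃ t ∈ p.support, t ∈ R.model v}.ncard

/-- A representation is varied if no bag is contained in the bag at a neighboring node. -/
def Varied (R : TreeRep G T) : Prop := ∀ ⦃t t'⦄, T.Adj t t' → ¬ R.bag t ⊆ R.bag t'

/-- The representation has adhesion less than `a`: the adhesion set of every edge of `T`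
has fewer than `a` vertices. -/
def AdhesionLT (R : TreeRep G T) (a : ℕ) : Prop :=
  ∀ ⦃t t'⦄, T.Adj t t' → (R.bag t ∩ R.bag t').ncard < a

/-- The torso of the representation at a node `t`: the subgraph induced on the bag at `t`
together with all edges inside adhesion sets of edges of `T` incident to `t`. -/
def torso (R : TreeRep G T) (t : N) : SimpleGraph (R.bag t) :=
  SimpleGraph.fromRel (fun u v =>
    G.Adj u v ∨ ∃ t', T.Adj t t' ∧ (u : V) ∈ R.bag t' ∧ (v : V) ∈ R.bag t')

end TreeRep

/-- `G` has pathwidth less than `k`: it has a representation over a path all of whose bags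
have at most `k` vertices. -/
def PathwidthLT {V : Type*} (G : SimpleGraph V) (k : ℕ) : Prop :=
  ∃ (m : ℕ) (R : TreeRep G (pathGraph (m + 1))), R.WidthLT k

/-- `G` has treewidth less than `k`: it has a representation over a tree all of whose bags
have at most `k` vertices. -/
def TreewidthLT {V : Type*} (G : SimpleGraph V) (k : ℕ) : Prop :=
  ∃ (N : Type) (_ : Fintype N) (T : SimpleGraph N), T.IsTree ∧
    ∃ R : TreeRep G T, R.WidthLT k

/-- `G` has treewidth at most `k`. -/
def TreewidthLE {V : Type*} (G : SimpleGraph V) (k : ℕ) : Prop :=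
  ∃ (N : Type) (_ : Fintype N) (T : SimpleGraph N), T.IsTree ∧
    ∃ R : TreeRep G T, R.WidthLE k

/-- A leaf of a graph: a vertex with at most one neighbor. -/
def IsLeafNode {N : Type*} (T : SimpleGraph N) (l : N) : Prop :=
  (T.neighborSet l).Subsingleton

/-- `H` is obtained from `G` by a sequence of edge contractions: there is a surjection
from `V(G)` onto `V(H)` with connected fibers inducing the adjacency of `H`. -/
def IsContraction {W V : Type*} (H : SimpleGraph W) (G : SimpleGraph V) : Prop :=
  ∃ f : V → W, Function.Surjective f ∧
    (∀ w : W, (G.induce (f ⁻¹' {w})).Connected) ∧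
    (∀ x y : W, H.Adj x y ↔ x ≠ y ∧ ∃ u v : V, f u = x ∧ f v = y ∧ G.Adj u v)

/-- `G` is an interval graph: the intersection graph of a family of real intervals. -/
def IsIntervalGraph {V : Type*} (G : SimpleGraph V) : Prop :=
  ∃ l r : V → ℝ, (∀ v, l v ≤ r v) ∧
    ∀ u v : V, G.Adj u v ↔ u ≠ v ∧ max (l u) (l v) ≤ min (r u) (r v)

/-- The internal vertices of a walk: vertices of the walk distinct from its two endpoints. -/
def WalkInternal {V : Type*} {G : SimpleGraph V} {x y : V} (p : G.Walk x y) : Set V :=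
  {w | w ∈ p.support ∧ w ≠ x ∧ w ≠ y}

/-- `H` is a topological minor of `G`: there are branch vertices `φ u` for `u ∈ V(H)` and
internally disjoint paths of `G` joining them, one for each edge of `H`. -/
def IsTopMinor {W V : Type*} (H : SimpleGraph W) (G : SimpleGraph V) : Prop :=
  ∃ (φ : W ↪ V) (P : ∀ ⦃u v : W⦄, H.Adj u v → G.Walk (φ u) (φ v)),
    (∀ ⦃u v⦄ (h : H.Adj u v), (P h).IsPath) ∧
    (∀ ⦃u v⦄ (h : H.Adj u v), P h.symm = (P h).reverse) ∧
    (∀ ⦃u v⦄ (h : H.Adj u v), ∀ w ∈ WalkInternal (P h), w ∉ Set.range φ) ∧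
    (∀ ⦃u v u' v'⦄ (h : H.Adj u v) (h' : H.Adj u' v'), s(u, v) ≠ s(u', v') →
      ∀ w ∈ WalkInternal (P h), w ∉ WalkInternal (P h'))

/-- `H` is (an isomorphic copy of) a subgraph of `G`. -/
def ContainsSubgraphCopy {A B : Type*} (H : SimpleGraph A) (G : SimpleGraph B) : Prop :=
  ∃ f : A ↪ B, ∀ u v : A, H.Adj u v → G.Adj (f u) (f v)

/-- `G` is `k`-degenerate: every (induced) subgraph has a vertex of degree at most `k`. -/
def Degenerate {V : Type*} (G : SimpleGraph V) (k : ℕ) : Prop :=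
  ∀ s : Set V, s.Nonempty → ∃ v ∈ s, {w | w ∈ s ∧ G.Adj v w}.ncard ≤ k

/-- The cycle on `ZMod m` (for `m ≥ 3` this is the cycle graph on `m` vertices). -/
def ringGraph (m : ℕ) : SimpleGraph (ZMod m) :=
  SimpleGraph.fromRel (fun i j => j = i + 1)

/-- Cliquewidth expressions with labels in `Fin k`. -/
inductive CWExpr (k : ℕ) where
  | vertex (l : Fin k) : CWExpr k
  | union (e₁ e₂ : CWExpr k) : CWExpr k
  | addEdges (i j : Fin k) (hij : i ≠ j) (e : CWExpr k) : CWExpr k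
  | relabel (f : Fin k → Fin k) (e : CWExpr k) : CWExpr k

namespace CWExpr

variable {k : ℕ}

/-- The vertex set of the graph described by a cliquewidth expression. -/
def verts : CWExpr k → Type
  | vertex _ => Unit
  | union e₁ e₂ => e₁.verts ⊕ e₂.verts
  | addEdges _ _ _ e => e.verts
  | relabel _ e => e.verts

/-- The labelling of the vertices described by a cliquewidth expression. -/
def label : (e : CWExpr k) → e.verts → Fin k
  | vertex l, _ => l
  | union e₁ _, Sum.inl x => e₁.label x
  | union _ e₂, Sum.inr x => e₂.label x
  | addEdges _ _ _ e, x => e.label x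
  | relabel f e, x => f (e.label x)

/-- The adjacency relation described by a cliquewidth expression. -/
def adj : (e : CWExpr k) → e.verts → e.verts → Prop
  | vertex _, _, _ => False
  | union e₁ _, Sum.inl x, Sum.inl y => e₁.adj x y
  | union _ e₂, Sum.inr x, Sum.inr y => e₂.adj x y
  | union _ _, _, _ => False
  | addEdges i j _ e, x, y =>
      e.adj x y ∨ (e.label x = i ∧ e.label y = j) ∨ (e.label x = j ∧ e.label y = i)
  | relabel _ e, x, y => e.adj x y

/-- The graph described by a cliquewidth expression. -/
def graph (e : CWExpr k) : SimpleGraph e.verts := SimpleGraph.fromRel e.adj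

end CWExpr

/-- `G` has cliquewidth at most `k`: it is isomorphic to the graph of a cliquewidth
expression with at most `k` labels. -/
def CliquewidthLE {V : Type*} (G : SimpleGraph V) (k : ℕ) : Prop :=
  ∃ e : CWExpr k, Nonempty (G ≃g e.graph)

/-- `G` has `(k, Δ)`-almost bounded degree: removing at most `k` vertices yields a graph of
maximum degree at most `Δ`. -/
def AlmostBoundedDegree {V : Type*} (G : SimpleGraph V) (k Δ : ℕ) : Prop :=
  ∃ X : Set V, X.ncard ≤ k ∧ ∀ v ∉ X, {w | w ∉ X ∧ G.Adj v w}.ncard ≤ Δ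

/-- An embedding scheme for `H`: a rotation system (a permutation of the darts that is,
around each vertex, a single cycle on the darts leaving that vertex) together with a
signature on the edges. -/
structure EmbScheme {W : Type*} (H : SimpleGraph W) where
  rot : Equiv.Perm H.Dart
  rot_fst : ∀ d : H.Dart, (rot d).fst = d.fst
  rot_cyclic : ∀ d d' : H.Dart, d.fst = d'.fst → ∃ n : ℕ, (rot ^ n) d = d'
  sign : Sym2 W → Bool

namespace EmbScheme

variable {W : Type*} {H : SimpleGraph W}

/-- The face-tracing step of an embedding scheme, acting on darts with a direction. -/
def faceStep (S : EmbScheme H) : H.Dart × Bool → H.Dart × Bool :=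
  fun p =>
    let s' := xor p.2 (S.sign p.1.edge)
    ((if s' then S.rot.symm p.1.symm else S.rot p.1.symm), s')

/-- The number of orbits of a function. -/
noncomputable def orbitCount {α : Type*} (f : α → α) : ℕ :=
  Nat.card (Quotient (Relation.EqvGen.setoid (fun x y => f x = y)))

/-- The scheme describes an embedding of `H` in a surface of Euler genus at most `g`.
Isolated vertices each bound one face; every other face is traced twice by `faceStep`,
so the number of faces is `orbitCount (faceStep) / 2` plus the number of isolated
vertices, and the Euler genus of the embedding is `2c - |V| + |E| - F`. -/
def GenusLE (S : EmbScheme H) (g : ℕ) : Prop :=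
  2 * Nat.card H.ConnectedComponent + Nat.card H.edgeSet ≤
    g + Nat.card W +
      (orbitCount S.faceStep / 2 + Nat.card {v : W | ∀ w, ¬ H.Adj v w})

/-- The cycle `e 0, e 1, …, e (m-1)` is a facial cycle of the embedding scheme `S`:
its consecutive darts are consecutive in a face traversal. -/
def IsFacialCycle (S : EmbScheme H) {m : ℕ} (e : ZMod m → W)
    (hadj : ∀ x : ZMod m, H.Adj (e x) (e (x + 1))) : Prop :=
  ∃ b : ZMod m → Bool, ∀ x : ZMod m,
    S.faceStep (⟨(e x, e (x + 1)), hadj x⟩, b x) =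
      (⟨(e (x + 1), e (x + 1 + 1)), hadj (x + 1)⟩, b (x + 1))

end EmbScheme

/-- `Hs` has a `C`-vortex of width less than `k`, where `C` is the cycle of `G₀` given by
`e`: the vertices common to `Hs` and `G₀` are exactly those of `C`, and `Hs` has a cycle
representation over `C` in which the model of each vertex of `C` contains that vertex and
every bag has at most `k` vertices. -/
def IsVortex {V : Type*} {G : SimpleGraph V} (Hs G₀ : G.Subgraph) {m : ℕ}
    (e : ZMod m → G₀.verts) (k : ℕ) : Prop :=
  Hs.verts ∩ G₀.verts = Subtype.val '' Set.range e ∧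
  ∃ model : Hs.verts → Set (ZMod m),
    (∀ v, ((ringGraph m).induce (model v)).Connected) ∧
    (∀ (x : ZMod m) (v : Hs.verts), (e x : V) = (v : V) → x ∈ model v) ∧
    (∀ ⦃u v⦄, Hs.coe.Adj u v → (model u ∩ model v).Nonempty) ∧
    (∀ t : ZMod m, {v : Hs.verts | t ∈ model v}.ncard ≤ k)

/-- `G` is `(g, p, a, k)`-almost-embeddable. -/
def AlmostEmbeddable {V : Type*} (G : SimpleGraph V) (g p a k : ℕ) : Prop :=
  ∃ A : Set V, A.ncard ≤ a ∧
  ∃ s : ℕ, s ≤ p ∧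
  ∃ (G₀ : G.Subgraph) (Gv : Fin s → G.Subgraph),
    (G₀ ⊔ ⨆ i, Gv i) = (⊤ : G.Subgraph).deleteVerts A ∧
    (∀ i j, i ≠ j → Disjoint (Gv i).verts (Gv j).verts) ∧
    ∃ S : EmbScheme G₀.coe, S.GenusLE g ∧
    ∃ (m : Fin s → ℕ) (e : ∀ i, ZMod (m i) → G₀.verts)
      (hadj : ∀ i x, G₀.coe.Adj (e i x) (e i (x + 1))),
      (∀ i, 3 ≤ m i) ∧
      (∀ i, Function.Injective (e i)) ∧
      (∀ i, S.IsFacialCycle (e i) (hadj i)) ∧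
      (∀ i j, i ≠ j → Disjoint (Set.range (e i)) (Set.range (e j))) ∧
      (∀ i, IsVortex (Gv i) G₀ (e i) k)

/-
Every bag of the representation is small. A torso of bounded degree outside few vertices contains
no large connected set without a long induced path. An almost-embeddable torso has no large clique
minor: modulo 2, the first homology of a closed surface has dimension at most its Euler genus,
which bounds the number of connected, pairwise touching vertex sets that cover each vertex only a
few times. On the other hand, a long path in a graph without a long induced path yields a large
clique minor. The Hamiltonian path of `G` induces a long path on the shadows of the vertices of a
large bag, and an induced path of shadows lifts to an induced path of `G`.

If all bags are small and `G` is huge, the representation contains a long chain of nested cuts,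
along which a part of the Hamiltonian path runs. A shortest path from the first cut to the last is
induced, hence short; deleting it lowers the order of every cut that it crosses and leaves a long
subpath of the Hamiltonian path. Induction on the order of the cuts then gives a contradiction.
-/

/-! ### Reachability inside a set of vertices -/

/-- `ReachableIn G U a b` says that some walk of `G` with all its vertices in `U` leads from `a`
to `b`. The trivial walk is allowed even when `a ∉ U`. -/
def ReachableIn {V : Type*} (G : SimpleGraph V) (U : Set V) : V → V → Prop :=
  Relation.ReflTransGen fun a b => G.Adj a b ∧ a ∈ U ∧ b ∈ U

/-- `ConnectedOn G U` says that any two vertices of `U` are joined by a walk of `G` inside `U`;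
the empty set is allowed. -/
def ConnectedOn {V : Type*} (G : SimpleGraph V) (U : Set V) : Prop :=
  ∀ a ∈ U, ∀ b ∈ U, ReachableIn G U a b

namespace ReachableIn

variable {V : Type*} {G : SimpleGraph V} {U U' : Set V} {a b c : V}

lemma refl (a : V) : ReachableIn G U a a := Relation.ReflTransGen.refl

lemma of_adj (h : G.Adj a b) (ha : a ∈ U) (hb : b ∈ U) : ReachableIn G U a b :=
  Relation.ReflTransGen.single ⟨h, ha, hb⟩

lemma trans (h : ReachableIn G U a b) (h' : ReachableIn G U b c) : ReachableIn G U a c :=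
  Relation.ReflTransGen.trans h h'

lemma symm (h : ReachableIn G U a b) : ReachableIn G U b a := by
  induction h with
  | refl => exact refl _
  | tail _ h ih => exact ih.head ⟨h.1.symm, h.2.2, h.2.1⟩

lemma mono (hU : U ⊆ U') (h : ReachableIn G U a b) : ReachableIn G U' a b :=
  Relation.ReflTransGen.mono (fun _ _ h => ⟨h.1, hU h.2.1, hU h.2.2⟩) _ _ h

lemma eq_or_mem (h : ReachableIn G U a b) : a = b ∨ a ∈ U ∧ b ∈ U := by
  induction h with
  | refl => exact Or.inl rfl
  | tail _ h ih =>
    rcases ih with rfl | ih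
    · exact Or.inr h.2
    · exact Or.inr ⟨ih.1, h.2.2⟩

lemma right_mem (h : ReachableIn G U a b) (ha : a ∈ U) : b ∈ U := by
  rcases h.eq_or_mem with rfl | h
  · exact ha
  · exact h.2

end ReachableIn

lemma reachableIn_univ {V : Type*} {G : SimpleGraph V} {a b : V} :
    ReachableIn G Set.univ a b ↔ G.Reachable a b := by
  simp [ReachableIn, reachable_iff_reflTransGen]

/-! ### Faces of an embedding scheme -/

namespace EmbScheme

section Faces

variable {W : Type*} {H : SimpleGraph W}

/-- A dart together with a direction; these are the states of face tracing. Each side of an edge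
is represented by two flags, one for each way of walking along it. -/
abbrev Flag (H : SimpleGraph W) := H.Dart × Bool

variable (S : EmbScheme H)

/-- The flag of the same side of the same edge, walked along in the other direction. -/
def reverse (p : Flag H) : Flag H := (p.1.symm, xor (!p.2) (S.sign p.1.edge))

@[simp] lemma reverse_reverse (p : Flag H) : S.reverse (S.reverse p) = p := by
  rcases p with ⟨d, b⟩
  simp only [reverse, Dart.symm_symm, Dart.edge_symm]
  cases b <;> cases S.sign d.edge <;> rfl

lemma faceStep_reverse_true (d : H.Dart) :
    S.faceStep (S.reverse (d, true)) = (S.rot d, false) := by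
  simp only [reverse, faceStep, Dart.symm_symm, Dart.edge_symm]
  cases S.sign d.edge <;> rfl

lemma faceStep_reverse_false (d : H.Dart) :
    S.faceStep (S.reverse (d, false)) = (S.rot.symm d, true) := by
  simp only [reverse, faceStep, Dart.symm_symm, Dart.edge_symm]
  cases S.sign d.edge <;> rfl

lemma faceStep_reverse_faceStep (p : Flag H) :
    S.faceStep (S.reverse (S.faceStep p)) = S.reverse p := by
  obtain ⟨⟨d, b⟩, rfl⟩ : ∃ q, S.reverse q = p := ⟨S.reverse p, S.reverse_reverse p⟩
  cases b
  · rw [faceStep_reverse_false, faceStep_reverse_true, reverse_reverse, Equiv.apply_symm_apply]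
  · rw [faceStep_reverse_true, faceStep_reverse_false, reverse_reverse, Equiv.symm_apply_apply]

lemma rot_symm_fst (d : H.Dart) : (S.rot.symm d).fst = d.fst := by
  rw [← S.rot_fst, Equiv.apply_symm_apply]

lemma faceStep_fst (p : Flag H) : (S.faceStep p).1.fst = p.1.snd := by
  dsimp only [faceStep]
  split_ifs
  exacts [S.rot_symm_fst _, S.rot_fst _]

/-- Two flags lie on the same face if they are related by face tracing and reversal. -/
def faceSetoid : Setoid (Flag H) :=
  Relation.EqvGen.setoid fun p q => S.reverse p = q ∨ S.faceStep p = q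

/-- The faces of an embedding scheme, apart from those bounded by isolated vertices. -/
def Face : Type _ := Quotient S.faceSetoid

/-- The face to which a flag belongs. -/
def face (p : Flag H) : S.Face := Quotient.mk S.faceSetoid p

@[simp] lemma face_reverse (p : Flag H) : S.face (S.reverse p) = S.face p :=
  (Quotient.sound (s := S.faceSetoid) (.rel _ _ (Or.inl rfl))).symm

@[simp] lemma face_faceStep (p : Flag H) : S.face (S.faceStep p) = S.face p :=
  (Quotient.sound (s := S.faceSetoid) (.rel _ _ (Or.inr rfl))).symm

lemma face_rot (d : H.Dart) : S.face (S.rot d, false) = S.face (d, true) := by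
  rw [← faceStep_reverse_true, face_faceStep, face_reverse]

lemma face_surjective : Function.Surjective S.face := Quotient.exists_rep

lemma face_rot_symm (d : H.Dart) : S.face (S.rot.symm d, true) = S.face (d, false) := by
  rw [← face_rot, Equiv.apply_symm_apply]

lemma eq_of_face_eq {α : Type*} {f : Flag H → α} (hrev : ∀ p, f (S.reverse p) = f p)
    (hstep : ∀ p, f (S.faceStep p) = f p) {p q : Flag H} (h : S.face p = S.face q) :
    f p = f q := by
  have h' : Relation.EqvGen (fun p q => S.reverse p = q ∨ S.faceStep p = q) p q :=
    Quotient.exact h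
  clear h
  induction h' with
  | rel x y h =>
    rcases h with rfl | rfl
    exacts [(hrev _).symm, (hstep _).symm]
  | refl x => rfl
  | symm x y _ ih => exact ih.symm
  | trans x y z _ _ h₁ h₂ => exact h₁.trans h₂

instance [Finite W] : Finite S.Face := by
  classical
  have := Fintype.ofFinite W
  exact Quotient.finite _

lemma orbitCount_faceStep_le [Finite W] : orbitCount S.faceStep ≤ 2 * Nat.card S.Face := by
  classical
  have := Fintype.ofFinite W
  let orbitSetoid := Relation.EqvGen.setoid fun x y => S.faceStep x = y
  let orbit : Flag H → Quotient orbitSetoid := Quotient.mk _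
  have orbit_faceStep (p) : orbit (S.faceStep p) = orbit p :=
    (Quotient.sound (s := orbitSetoid) (.rel _ _ rfl)).symm
  have orbit_reverse_faceStep (p) : orbit (S.reverse (S.faceStep p)) = orbit (S.reverse p) := by
    rw [← orbit_faceStep, faceStep_reverse_faceStep]
  have orbits_eq {p q} (h : S.face p = S.face q) :
      ({orbit p, orbit (S.reverse p)} : Set (Quotient orbitSetoid)) =
        {orbit q, orbit (S.reverse q)} := by
    refine S.eq_of_face_eq (f := fun p => ({orbit p, orbit (S.reverse p)} : Set _)) ?_ ?_ h
    · intro p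
      rw [reverse_reverse, Set.pair_comm]
    · intro p
      rw [orbit_faceStep, orbit_reverse_faceStep]
  choose rep face_rep using S.face_surjective
  have hsurj : Function.Surjective fun z : S.Face × Bool =>
      if z.2 then orbit (rep z.1) else orbit (S.reverse (rep z.1)) := by
    intro c
    obtain ⟨p, rfl⟩ := Quotient.exists_rep c
    have hp : orbit p ∈ ({orbit (rep (S.face p)), orbit (S.reverse (rep (S.face p)))} : Set _) :=
      orbits_eq (face_rep (S.face p)) ▸ Set.mem_insert _ _
    rcases hp with h | h
    · exact ⟨(S.face p, true), h.symm⟩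
    · exact ⟨(S.face p, false), h.symm⟩
  have hcard := Nat.card_le_card_of_surjective _ hsurj
  rwa [Nat.card_prod, Nat.card_eq_fintype_card (α := Bool), Fintype.card_bool, mul_comm] at hcard

end Faces

section Darts

variable {W : Type*} {H : SimpleGraph W}

/-- A chosen orientation of an edge. -/
noncomputable def edgeDart (e : H.edgeSet) : H.Dart where
  toProd := e.1.out
  adj := by
    have h : s(e.1.out.1, e.1.out.2) = e.1 := e.1.out_eq
    exact (h ▸ e.2 :)

/-- The edge underlying a dart, as an element of the edge set. -/
def dartEdge (d : H.Dart) : H.edgeSet := ⟨d.edge, d.edge_mem⟩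

@[simp] lemma dartEdge_edgeDart (e : H.edgeSet) : dartEdge (edgeDart e) = e :=
  Subtype.ext e.1.out_eq

lemma dartEdge_eq_iff {d d' : H.Dart} : dartEdge d = dartEdge d' ↔ d = d' ∨ d = d'.symm :=
  Subtype.ext_iff.trans (dart_edge_eq_iff d d')

lemma edgeDart_dartEdge (d : H.Dart) :
    edgeDart (dartEdge d) = d ∨ edgeDart (dartEdge d) = d.symm :=
  dartEdge_eq_iff.1 (dartEdge_edgeDart _)

open scoped Classical in
lemma sum_dart_eq_sum_edge [Fintype W] {M : Type*} [AddCommMonoid M] (f : H.Dart → M) :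
    ∑ d, f d = ∑ e : H.edgeSet, (f (edgeDart e) + f (edgeDart e).symm) := by
  rw [← Finset.sum_fiberwise (g := dartEdge)]
  refine Finset.sum_congr rfl fun e _ => ?_
  have hfiber : ({d | dartEdge d = e} : Finset H.Dart) = {edgeDart e, (edgeDart e).symm} := by
    ext d
    rw [Finset.mem_filter_univ, ← dartEdge_edgeDart e, dartEdge_eq_iff, dartEdge_edgeDart]
    simp
  rw [hfiber, Finset.sum_pair (Dart.symm_ne _).symm]

open scoped Classical in
lemma sum_flag_eq_sum_edge [Fintype W] (S : EmbScheme H) {M : Type*} [AddCommMonoid M]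
    (f : Flag H → M) :
    ∑ p, f p =
      ∑ e : H.edgeSet, ∑ b : Bool, (f (edgeDart e, b) + f (S.reverse (edgeDart e, b))) := by
  rw [Fintype.sum_prod_type, sum_dart_eq_sum_edge]
  refine Finset.sum_congr rfl fun e _ => ?_
  rw [Finset.sum_add_distrib]
  congr 1
  simp only [reverse]
  cases S.sign (edgeDart e).edge <;> simp [add_comm]

end Darts

end EmbScheme

/-! ### The chain complex of an embedding scheme modulo 2 -/

namespace EmbScheme

section ChainComplex

variable {W : Type*} {H : SimpleGraph W} (S : EmbScheme H)

/-- The vertices of the triangulation of the surface obtained by putting a new vertex, the centre,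
into every face. -/
abbrev ZeroCell := W ⊕ S.Face

/-- The edges of the triangulation: the edges of `H`, and for every dart `d` the segment inside the
corner between `d` and `rot d` that joins `d.fst` to the centre of the face there. -/
abbrev OneCell (H : SimpleGraph W) := H.edgeSet ⊕ H.Dart

/-- The first endpoint of a 1-cell. -/
noncomputable def cellFst : OneCell H → S.ZeroCell
  | Sum.inl e => Sum.inl (edgeDart e).fst
  | Sum.inr d => Sum.inl d.fst

/-- The second endpoint of a 1-cell. -/
noncomputable def cellSnd : OneCell H → S.ZeroCell
  | Sum.inl e => Sum.inl (edgeDart e).snd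
  | Sum.inr d => Sum.inr (S.face (d, true))

/-- The set of endpoints of a 1-cell that are vertices of the graph. -/
def cellVerts : OneCell H → Set W
  | Sum.inl e => {v | v ∈ (e : Sym2 W)}
  | Sum.inr d => {d.fst}

open scoped Classical in
/-- The chain modulo 2 consisting of a single cell. -/
noncomputable def unitChain {α : Type*} (a : α) : α → ZMod 2 := Pi.single a 1

lemma unitChain_self {α : Type*} (a : α) : unitChain a a = 1 := by
  classical exact Pi.single_eq_same a 1

lemma unitChain_of_ne {α : Type*} {a x : α} (h : x ≠ a) : unitChain a x = 0 := by
  classical exact Pi.single_eq_of_ne h 1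

lemma unitChain_congr {α β : Type*} {a x : α} {b y : β} (h : x = a ↔ y = b) :
    unitChain a x = unitChain b y := by
  classical
  simp only [unitChain, Pi.single_apply, h]

/-- The 2-chains modulo 2. A triangle is a pair of opposite flags, so a 2-chain is encoded as a
function on flags that is invariant under reversal. -/
def twoChains : Submodule (ZMod 2) (Flag H → ZMod 2) :=
  LinearMap.eqLocus (LinearMap.funLeft (ZMod 2) (ZMod 2) S.reverse) LinearMap.id

variable {S}

lemma mem_twoChains {y : Flag H → ZMod 2} : y ∈ S.twoChains ↔ ∀ p, y (S.reverse p) = y p :=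
  funext_iff

variable (S) in
/-- The boundary of a 2-chain. -/
noncomputable def boundaryTwo : S.twoChains →ₗ[ZMod 2] (OneCell H → ZMod 2) where
  toFun y
    | Sum.inl e => y.1 (edgeDart e, false) + y.1 (edgeDart e, true)
    | Sum.inr d => y.1 (d, true) + y.1 (S.rot d, false)
  map_add' x y := by
    funext c
    rcases c with e | d <;> exact add_add_add_comm _ _ _ _
  map_smul' a y := by
    funext c
    rcases c with e | d <;> exact (mul_add _ _ _).symm

lemma boundaryTwo_edge (y : S.twoChains) (e : H.edgeSet) :
    S.boundaryTwo y (Sum.inl e) = y.1 (edgeDart e, false) + y.1 (edgeDart e, true) := rfl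

lemma boundaryTwo_corner (y : S.twoChains) (d : H.Dart) :
    S.boundaryTwo y (Sum.inr d) = y.1 (d, true) + y.1 (S.rot d, false) := rfl

section Cycles

variable {y : S.twoChains}

lemma apply_false_eq_apply_true {d : H.Dart}
    (h : S.boundaryTwo y (Sum.inl (dartEdge d)) = 0) : y.1 (d, false) = y.1 (d, true) := by
  have hy := mem_twoChains.1 y.2
  rw [boundaryTwo_edge, CharTwo.add_eq_zero] at h
  rcases edgeDart_dartEdge d with hd | hd <;> rw [hd] at h
  · exact h
  · rw [← hy (d, false), ← hy (d, true)]
    simp only [reverse]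
    cases S.sign d.edge
    exacts [h.symm, h]

lemma apply_eq_of_fst_eq {v : W}
    (h : ∀ c, v ∈ cellVerts c → S.boundaryTwo y c = 0) {p q : Flag H} (hp : p.1.fst = v)
    (hq : q.1.fst = v) : y.1 p = y.1 q := by
  have hedge (d : H.Dart) (hd : d.fst = v) : y.1 (d, false) = y.1 (d, true) :=
    apply_false_eq_apply_true (h _ (hd ▸ Sym2.mem_mk_left d.fst d.snd))
  have hrot (d : H.Dart) (hd : d.fst = v) : y.1 (S.rot d, true) = y.1 (d, true) := by
    rw [← hedge _ ((S.rot_fst d).trans hd)]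
    exact (CharTwo.add_eq_zero.1 (h (Sum.inr d) hd.symm)).symm
  have hpow (n : ℕ) : ∀ d : H.Dart, d.fst = v → y.1 ((S.rot ^ n) d, true) = y.1 (d, true) := by
    induction n with
    | zero => exact fun d _ => rfl
    | succ n ih =>
      intro d hd
      rw [pow_succ, Equiv.Perm.mul_apply, ih _ ((S.rot_fst d).trans hd), hrot d hd]
  have hdir (p : Flag H) (hp : p.1.fst = v) : y.1 p = y.1 (p.1, true) := by
    rcases p with ⟨d, _ | _⟩
    exacts [hedge d hp, rfl]
  obtain ⟨n, hn⟩ := S.rot_cyclic p.1 q.1 (hp.trans hq.symm)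
  rw [hdir p hp, hdir q hq, ← hn, hpow n _ hp]

lemma apply_eq_of_reachableIn {N : Set W} {u v : W}
    (h : ∀ c, (cellVerts c ∩ N).Nonempty → S.boundaryTwo y c = 0) (hu : u ∈ N)
    (huv : ReachableIn H N u v) {p q : Flag H} (hp : p.1.fst = u) (hq : q.1.fst = v) :
    y.1 p = y.1 q := by
  have hvert {w : W} (hw : w ∈ N) {p q : Flag H} (hp : p.1.fst = w) (hq : q.1.fst = w) :
      y.1 p = y.1 q :=
    apply_eq_of_fst_eq (fun c hc => h c ⟨w, hc, hw⟩) hp hq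
  induction huv generalizing q with
  | refl => exact hvert hu hp hq
  | @tail a b _ hab ih =>
    let r : Flag H := (⟨(a, b), hab.1⟩, true)
    calc y.1 p = y.1 r := ih rfl
      _ = y.1 (S.reverse r) := (mem_twoChains.1 y.2 r).symm
      _ = y.1 q := hvert hab.2.2 rfl hq

lemma apply_eq_of_reachable {u v : W} (h : S.boundaryTwo y = 0) (huv : H.Reachable u v)
    {p q : Flag H} (hp : p.1.fst = u) (hq : q.1.fst = v) : y.1 p = y.1 q :=
  apply_eq_of_reachableIn (N := Set.univ) (fun c _ => congrFun h c) (Set.mem_univ u)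
    (reachableIn_univ.2 huv) hp hq

end Cycles

variable [Fintype W]

open scoped Classical in
variable (S) in
/-- The boundary of a 1-chain. -/
noncomputable def boundaryOne : (OneCell H → ZMod 2) →ₗ[ZMod 2] (S.ZeroCell → ZMod 2) :=
  Fintype.linearCombination (ZMod 2) fun c => unitChain (S.cellFst c) + unitChain (S.cellSnd c)

lemma boundaryOne_unitChain (c : OneCell H) :
    S.boundaryOne (unitChain c) = unitChain (S.cellFst c) + unitChain (S.cellSnd c) := by
  classical
  simp [boundaryOne, unitChain, Fintype.linearCombination_apply_single]

lemma boundaryOne_boundaryTwo (y : S.twoChains) : S.boundaryOne (S.boundaryTwo y) = 0 := by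
  classical
  let vert (v : W) : S.ZeroCell → ZMod 2 := unitChain (Sum.inl v)
  let centre (p : Flag H) : S.ZeroCell → ZMod 2 := unitChain (Sum.inr (S.face p))
  have hcorner : ∑ d : H.Dart, (y.1 (d, true) + y.1 (S.rot d, false)) •
      (vert d.fst + centre (d, true)) = ∑ p : Flag H, y.1 p • (vert p.1.fst + centre p) := by
    simp only [Fintype.sum_prod_type, Fintype.sum_bool, add_smul, Finset.sum_add_distrib]
    congr 1
    rw [← Equiv.sum_comp S.rot fun d : H.Dart => y.1 (d, false) • (vert d.fst + centre (d, false))]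
    simp only [S.rot_fst, centre, face_rot]
  have hside (e : H.edgeSet) (b : Bool) :
      y.1 (edgeDart e, b) • (vert (edgeDart e).fst + centre (edgeDart e, b)) +
        y.1 (S.reverse (edgeDart e, b)) • (vert (S.reverse (edgeDart e, b)).1.fst +
          centre (S.reverse (edgeDart e, b))) =
      y.1 (edgeDart e, b) • (vert (edgeDart e).fst + vert (edgeDart e).snd) := by
    rw [mem_twoChains.1 y.2, ← smul_add]
    simp only [centre, face_reverse]
    rw [add_comm (vert (S.reverse _).1.fst), ZModModule.add_add_add_cancel]
    rfl
  have hsum : S.boundaryOne (S.boundaryTwo y) =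
      ∑ e : H.edgeSet, (y.1 (edgeDart e, false) + y.1 (edgeDart e, true)) •
        (vert (edgeDart e).fst + vert (edgeDart e).snd) +
      ∑ d : H.Dart, (y.1 (d, true) + y.1 (S.rot d, false)) • (vert d.fst + centre (d, true)) := by
    rw [boundaryOne, Fintype.linearCombination_apply, Fintype.sum_sum_type]
    rfl
  rw [hsum, hcorner, sum_flag_eq_sum_edge S]
  simp only [hside, Fintype.sum_bool, ← add_smul, add_comm (y.1 (edgeDart _, false))]
  exact ZModModule.add_self _

end ChainComplex

end EmbScheme

/-! ### The Euler genus bounds the first homology -/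

lemma eq_of_reachable_of_isIsolated {W : Type*} {H : SimpleGraph W} {u v : W}
    (h : H.Reachable u v) (hu : H.IsIsolated u) :
    u = v := by
  obtain ⟨_ | ⟨h, -⟩⟩ := h
  · rfl
  · exact absurd h (hu _)

lemma two_mul_card_edgeSet_eq_card_dart {W : Type*} [Finite W] {H : SimpleGraph W} :
     2 * Nat.card H.edgeSet = Nat.card H.Dart := by
  classical
  have := Fintype.ofFinite W
  rw [Nat.card_eq_fintype_card, Nat.card_eq_fintype_card, dart_card_eq_twice_card_edges,
    edgeFinset_card]

namespace EmbScheme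

section TwoChains

variable {W : Type*} {H : SimpleGraph W} (S : EmbScheme H)

lemma two_mul_card_edgeSet_le_finrank_twoChains [Finite W] :
    2 * Nat.card H.edgeSet ≤ Module.finrank (ZMod 2) S.twoChains := by
  classical
  have := Fintype.ofFinite W
  let L : (Flag H → ZMod 2) →ₗ[ZMod 2] (Flag H → ZMod 2) :=
    LinearMap.funLeft (ZMod 2) (ZMod 2) S.reverse + LinearMap.id
  have hL (y p) : L y p = y (S.reverse p) + y p := rfl
  have hker : L.ker ≤ S.twoChains := fun y hy =>
    mem_twoChains.2 fun p => CharTwo.add_eq_zero.1 (congrFun hy p)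
  have hrange : L.range ≤ S.twoChains := by
    rintro _ ⟨y, rfl⟩
    rw [mem_twoChains]
    intro p
    rw [hL, hL, reverse_reverse, add_comm]
  have hrank := L.finrank_range_add_finrank_ker
  rw [Module.finrank_fintype_fun_eq_card, Fintype.card_prod, Fintype.card_bool,
    ← Nat.card_eq_fintype_card, ← two_mul_card_edgeSet_eq_card_dart] at hrank
  have := Submodule.finrank_mono hker
  have := Submodule.finrank_mono hrange
  lia

lemma finrank_ker_boundaryTwo_add_le [Finite W] :
    Module.finrank (ZMod 2) S.boundaryTwo.ker + Nat.card {v : W | H.IsIsolated v} ≤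
      Nat.card H.ConnectedComponent := by
  classical
  have := Fintype.ofFinite W
  let isolated (C : H.ConnectedComponent) : Prop := H.IsIsolated C.out
  have hout (v : W) : H.Reachable v (H.connectedComponentMk v).out :=
    (ConnectedComponent.exact (Quot.out_eq (H.connectedComponentMk v))).symm
  have hiso : Nat.card {v : W | H.IsIsolated v} ≤ Fintype.card {C // isolated C} := by
    rw [← Nat.card_eq_fintype_card]
    refine Nat.card_le_card_of_injective (fun v => ⟨H.connectedComponentMk v.1, ?_⟩) ?_
    · change H.IsIsolated _
      rw [← eq_of_reachable_of_isIsolated (hout v.1) v.2]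
      exact v.2
    · intro u v huv
      exact Subtype.ext <| eq_of_reachable_of_isIsolated
        (ConnectedComponent.exact (congrArg Subtype.val huv)) u.2
  have hdart (C : {C // ¬ isolated C}) : ∃ d : H.Dart, d.fst = C.1.out := by
    obtain ⟨w, hw⟩ := not_forall_not.1 C.2
    exact ⟨⟨(_, w), hw⟩, rfl⟩
  choose dart dart_fst using hdart
  let L : S.boundaryTwo.ker →ₗ[ZMod 2] ({C // ¬ isolated C} → ZMod 2) :=
    LinearMap.funLeft (ZMod 2) (ZMod 2) (fun C => (dart C, true)) ∘ₗ
      S.twoChains.subtype ∘ₗ S.boundaryTwo.ker.subtype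
  have hL : Function.Injective L := by
    rw [← LinearMap.ker_eq_bot, LinearMap.ker_eq_bot']
    rintro ⟨y, hy⟩ hLy
    ext p
    have hC : ¬ isolated (H.connectedComponentMk p.1.fst) := fun hC => by
      have hfst := eq_of_reachable_of_isIsolated (hout p.1.fst).symm hC
      exact hC p.1.snd (by rw [hfst]; exact p.1.adj)
    exact (apply_eq_of_reachable hy (hout p.1.fst) rfl (dart_fst ⟨_, hC⟩)).trans
      (congrFun hLy ⟨_, hC⟩)
  have hker := LinearMap.finrank_le_finrank_of_injective hL
  rw [Module.finrank_fintype_fun_eq_card] at hker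
  have := Fintype.card_subtype_compl isolated
  have := Fintype.card_subtype_le isolated
  rw [Nat.card_eq_fintype_card (α := H.ConnectedComponent)]
  lia

end TwoChains

section ChainsIn

variable {W : Type*} {H : SimpleGraph W} {Q Q' : Set W}

/-- The 1-chains all of whose cells have their graph vertices in `Q`. -/
def chainsIn (H : SimpleGraph W) (Q : Set W) : Submodule (ZMod 2) (OneCell H → ZMod 2) :=
  Submodule.pi {c | ¬ cellVerts c ⊆ Q} fun _ => ⊥

lemma chainsIn_mono (hQ : Q ⊆ Q') : chainsIn H Q ≤ chainsIn H Q' :=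
  fun _ h c hc => h c fun h' => hc (h'.trans hQ)

lemma unitChain_mem_chainsIn {c : OneCell H} (hc : cellVerts c ⊆ Q) :
    unitChain c ∈ chainsIn H Q :=
  fun _ hi => unitChain_of_ne fun h => hi (h ▸ hc)

end ChainsIn

section Homology

variable {W : Type*} [Fintype W] {H : SimpleGraph W} {S : EmbScheme H} {Q Q' : Set W}
  {p q r : S.ZeroCell}

variable (S) in
/-- Two 0-cells are homologous in `Q` if their sum is the boundary of a 1-chain in `Q`. -/
def HomologousIn (Q : Set W) (p q : S.ZeroCell) : Prop :=
  ∃ ρ ∈ chainsIn H Q, S.boundaryOne ρ = unitChain p + unitChain q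

namespace HomologousIn

lemma refl (Q : Set W) (p : S.ZeroCell) : S.HomologousIn Q p p :=
  ⟨0, zero_mem _, by rw [map_zero, ZModModule.add_self]⟩

lemma symm (h : S.HomologousIn Q p q) : S.HomologousIn Q q p := by
  obtain ⟨ρ, hQ, hρ⟩ := h
  exact ⟨ρ, hQ, by rw [hρ, add_comm]⟩

lemma trans (h : S.HomologousIn Q p q) (h' : S.HomologousIn Q q r) : S.HomologousIn Q p r := by
  obtain ⟨ρ, hQ, hρ⟩ := h
  obtain ⟨ρ', hQ', hρ'⟩ := h'
  exact ⟨ρ + ρ', add_mem hQ hQ', by rw [map_add, hρ, hρ', ZModModule.add_add_add_cancel]⟩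

lemma mono (hQ : Q ⊆ Q') (h : S.HomologousIn Q p q) : S.HomologousIn Q' p q :=
  h.imp fun _ h => ⟨chainsIn_mono hQ h.1, h.2⟩

lemma of_cell (c : OneCell H) (hc : cellVerts c ⊆ Q) :
    S.HomologousIn Q (S.cellFst c) (S.cellSnd c) :=
  ⟨unitChain c, unitChain_mem_chainsIn hc, boundaryOne_unitChain c⟩

lemma of_adj {a b : W} (h : H.Adj a b) (ha : a ∈ Q) (hb : b ∈ Q) :
    S.HomologousIn Q (Sum.inl a) (Sum.inl b) := by
  let d : H.Dart := ⟨(a, b), h⟩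
  have hd : cellVerts (Sum.inl (dartEdge d)) ⊆ Q := by
    intro v hv
    rcases Sym2.mem_iff.1 (show v ∈ s(a, b) from hv) with rfl | rfl
    exacts [ha, hb]
  have hcell := of_cell (S := S) _ hd
  simp only [cellFst, cellSnd] at hcell
  rcases edgeDart_dartEdge d with h | h <;> rw [h] at hcell
  exacts [hcell, hcell.symm]

lemma of_reachableIn {a b : W} (h : ReachableIn H Q a b) :
    S.HomologousIn Q (Sum.inl a) (Sum.inl b) := by
  induction h with
  | refl => exact refl _ _
  | tail _ h ih => exact ih.trans (of_adj h.1 h.2.1 h.2.2)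

lemma of_flag (p : Flag H) (hp : p.1.fst ∈ Q) :
    S.HomologousIn Q (Sum.inl p.1.fst) (Sum.inr (S.face p)) := by
  rcases p with ⟨d, _ | _⟩
  · rw [← rot_symm_fst S] at hp ⊢
    rw [← face_rot_symm]
    exact of_cell (Sum.inr (S.rot.symm d)) (Set.singleton_subset_iff.2 hp)
  · exact of_cell (Sum.inr d) (Set.singleton_subset_iff.2 hp)

end HomologousIn

variable (S)

lemma card_le_finrank_range_boundaryOne_add :
    Nat.card W + Nat.card S.Face ≤
      Module.finrank (ZMod 2) S.boundaryOne.range + Nat.card H.ConnectedComponent := by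
  classical
  have := Fintype.ofFinite S.Face
  let base (C : H.ConnectedComponent) : S.ZeroCell := Sum.inl C.out
  let U := Submodule.span (ZMod 2) (Set.range fun C => unitChain (base C))
  have hU : Module.finrank (ZMod 2) U ≤ Nat.card H.ConnectedComponent := by
    rw [Nat.card_eq_fintype_card]
    exact finrank_range_le_card _
  have hvert (v : W) : ∃ C, S.HomologousIn Set.univ (Sum.inl v) (base C) :=
    ⟨H.connectedComponentMk v, .of_reachableIn <| reachableIn_univ.2 <|
      (ConnectedComponent.exact (Quot.out_eq (H.connectedComponentMk v))).symm⟩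
  have hcell (p : S.ZeroCell) : ∃ C, S.HomologousIn Set.univ p (base C) := by
    rcases p with v | f
    · exact hvert v
    · obtain ⟨p, rfl⟩ := S.face_surjective f
      exact (hvert p.1.fst).imp fun _ h => (HomologousIn.of_flag p (Set.mem_univ _)).symm.trans h
  have htop : S.boundaryOne.range ⊔ U = ⊤ := by
    rw [eq_top_iff, ← (Pi.basisFun (ZMod 2) S.ZeroCell).span_eq, Submodule.span_le]
    rintro _ ⟨p, rfl⟩
    obtain ⟨C, ρ, -, hρ⟩ := hcell p
    have hp : unitChain p = S.boundaryOne ρ + unitChain (base C) := by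
      rw [hρ, add_assoc, ZModModule.add_self, add_zero]
    rw [Pi.basisFun_apply, show Pi.single p 1 = unitChain p by unfold unitChain; congr!, hp]
    exact Submodule.add_mem_sup ⟨ρ, rfl⟩ (Submodule.subset_span ⟨C, rfl⟩)
  have hsup := Submodule.finrank_add_le_finrank_add_finrank S.boundaryOne.range U
  rw [htop, finrank_top, Module.finrank_fintype_fun_eq_card, ← Nat.card_eq_fintype_card,
    Nat.card_sum] at hsup
  lia

theorem finrank_ker_boundaryOne_le {S : EmbScheme H} {g : ℕ} (hg : S.GenusLE g) :
    Module.finrank (ZMod 2) S.boundaryOne.ker ≤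
      Module.finrank (ZMod 2) S.boundaryTwo.range + g := by
  classical
  have hrank₁ := S.boundaryOne.finrank_range_add_finrank_ker
  have hrank₂ := S.boundaryTwo.finrank_range_add_finrank_ker
  rw [Module.finrank_fintype_fun_eq_card, ← Nat.card_eq_fintype_card, Nat.card_sum,
    ← two_mul_card_edgeSet_eq_card_dart] at hrank₁
  have hrange := S.card_le_finrank_range_boundaryOne_add
  have hchains := S.two_mul_card_edgeSet_le_finrank_twoChains
  have hker := S.finrank_ker_boundaryTwo_add_le
  have hfaces := S.orbitCount_faceStep_le
  unfold GenusLE at hg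
  unfold IsIsolated at hker
  lia

end Homology

end EmbScheme

lemma finrank_map_mkQ_le {K E : Type*} [Field K] [AddCommGroup E] [Module K E]
    [FiniteDimensional K E] {B Z : Submodule K E} {g : ℕ} (hBZ : B ≤ Z)
    (hg : Module.finrank K Z ≤ Module.finrank K B + g) :
    Module.finrank K (Z.map B.mkQ) ≤ g := by
  have hrank := (B.mkQ.domRestrict Z).finrank_range_add_finrank_ker
  rw [LinearMap.range_domRestrict, LinearMap.ker_domRestrict, Submodule.ker_mkQ] at hrank
  have hB := (Submodule.submoduleOfEquivOfLe hBZ).finrank_eq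
  rw [Submodule.submoduleOf] at hB
  lia

lemma exists_disjoint_span_of_finrank_le {K E ι : Type*} [Field K] [AddCommGroup E] [Module K E]
    [FiniteDimensional K E] [Finite ι] {B Z : Submodule K E} {g : ℕ} (hBZ : B ≤ Z)
    (hg : Module.finrank K Z ≤ Module.finrank K B + g) {C : ι → E} (hC : ∀ i, C i ∈ Z) :
    ∃ X : Finset ι, X.card ≤ g ∧ Disjoint (Submodule.span K (C '' X)) B ∧
      ∀ i, ∃ z ∈ Submodule.span K (C '' X), C i + z ∈ B := by
  obtain ⟨X, -, -, hspan, hli⟩ := exists_linearIndepOn_extension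
    (linearIndepOn_empty K (B.mkQ ∘ C)) (Set.empty_subset Set.univ)
  lift X to Finset ι using Set.toFinite X
  refine ⟨X, ?_, ?_, fun i => ?_⟩
  · calc X.card = Module.finrank K (Submodule.span K (Set.range fun x : X => B.mkQ (C x))) := by
          rw [← Fintype.card_coe]
          exact (finrank_span_eq_card hli).symm
      _ ≤ Module.finrank K (Z.map B.mkQ) := by
          refine Submodule.finrank_mono (Submodule.span_le.2 ?_)
          rintro _ ⟨x, rfl⟩
          exact ⟨C x, hC x, rfl⟩
      _ ≤ g := finrank_map_mkQ_le hBZ hg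
  · rw [Set.image_eq_range, ← B.ker_mkQ]
    exact Submodule.range_ker_disjoint hli
  · have hi : B.mkQ (C i) ∈ (Submodule.span K (C '' X)).map B.mkQ := by
      rw [Submodule.map_span, ← Set.image_comp]
      exact hspan ⟨i, trivial, rfl⟩
    obtain ⟨z, hz, hzi⟩ := hi
    refine ⟨-z, neg_mem hz, ?_⟩
    rw [← B.ker_mkQ, LinearMap.mem_ker, map_add, map_neg, hzi, add_neg_cancel]

/-! ### Brambles in embedded graphs have bounded size -/

section HitCount

variable {W ι : Type*} {D : ι → Set W} {Q Q' : Set W}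

/-- The number of members of the family `D` that meet `Q`. -/
noncomputable def hitCount (D : ι → Set W) (Q : Set W) : ℕ := {j | (D j ∩ Q).Nonempty}.ncard

lemma hitCount_eq_zero (h : ∀ j, Disjoint (D j) Q) : hitCount D Q = 0 := by
  have hempty : {j | (D j ∩ Q).Nonempty} = ∅ :=
    Set.eq_empty_of_forall_notMem fun j hj => Set.not_disjoint_iff_nonempty_inter.2 hj (h j)
  rw [hitCount, hempty, Set.ncard_empty]

lemma exists_disjoint_of_hitCount_lt (h : hitCount D Q < Nat.card ι) :
    ∃ j, Disjoint (D j) Q := by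
  by_contra! hno
  have huniv : {j | (D j ∩ Q).Nonempty} = Set.univ :=
    Set.eq_univ_of_forall fun j => Set.not_disjoint_iff_nonempty_inter.1 (hno j)
  rw [hitCount, huniv, Set.ncard_univ] at h
  exact lt_irrefl _ h

variable [Finite ι]

lemma hitCount_union_le : hitCount D (Q ∪ Q') ≤ hitCount D Q + hitCount D Q' := by
  refine le_trans (Set.ncard_le_ncard ?_) (Set.ncard_union_le _ _)
  rintro j ⟨v, hv, h | h⟩
  exacts [Or.inl ⟨v, hv, h⟩, Or.inr ⟨v, hv, h⟩]

lemma hitCount_singleton_le (v : W) : hitCount D {v} ≤ {j | v ∈ D j}.ncard := by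
  refine Set.ncard_le_ncard ?_
  rintro j ⟨_, hw, rfl⟩
  exact hw

lemma hitCount_biUnion_le {α : Type*} (X : Finset α) {Q : α → Set W} {K : ℕ}
    (h : ∀ x ∈ X, hitCount D (Q x) ≤ K) : hitCount D (⋃ x ∈ X, Q x) ≤ X.card * K := by
  classical
  induction X using Finset.induction_on with
  | empty => exact (hitCount_eq_zero (by simp)).trans_le (Nat.zero_le _)
  | insert a X ha ih =>
    rw [Finset.set_biUnion_insert, Finset.card_insert_of_notMem ha]
    have hX := ih fun x hx => h x (Finset.mem_insert_of_mem hx)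
    have := h a (Finset.mem_insert_self a X)
    linarith [hitCount_union_le (D := D) (Q := Q a) (Q' := ⋃ x ∈ X, Q x)]

end HitCount

namespace EmbScheme

section HomologousHitting

variable {W ι : Type*} [Fintype W] {H : SimpleGraph W} {S : EmbScheme H} {D : ι → Set W}
  {K K' κ : ℕ} {p q r : S.ZeroCell}

/-- The graph vertices of a 0-cell. -/
def zeroCellVerts : S.ZeroCell → Set W
  | Sum.inl v => {v}
  | Sum.inr _ => ∅

variable (S D) in
/-- Two 0-cells are homologous inside a vertex set that contains them and meets at most `K` members
of the family `D`. -/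
def HomologousHitting (K : ℕ) (p q : S.ZeroCell) : Prop :=
  ∃ Q, hitCount D Q ≤ K ∧ zeroCellVerts p ⊆ Q ∧ zeroCellVerts q ⊆ Q ∧ S.HomologousIn Q p q

namespace HomologousHitting

lemma symm (h : S.HomologousHitting D K p q) : S.HomologousHitting D K q p := by
  obtain ⟨Q, hK, hp, hq, h⟩ := h
  exact ⟨Q, hK, hq, hp, h.symm⟩

lemma mono (hK : K ≤ K') (h : S.HomologousHitting D K p q) : S.HomologousHitting D K' p q :=
  h.imp fun _ h => ⟨h.1.trans hK, h.2⟩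

variable [Finite ι]

lemma trans (h : S.HomologousHitting D K p q) (h' : S.HomologousHitting D K' q r) :
    S.HomologousHitting D (K + K') p r := by
  obtain ⟨Q, hK, hp, -, h⟩ := h
  obtain ⟨Q', hK', -, hr, h'⟩ := h'
  exact ⟨Q ∪ Q', hitCount_union_le.trans (add_le_add hK hK'), hp.trans Set.subset_union_left,
    hr.trans Set.subset_union_right,
    (h.mono Set.subset_union_left).trans (h'.mono Set.subset_union_right)⟩

lemma of_homologousIn_pair (hκ : ∀ v, {j | v ∈ D j}.ncard ≤ κ) {a b : W}
    (h : S.HomologousIn {a, b} (Sum.inl a) (Sum.inl b)) :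
    S.HomologousHitting D (2 * κ) (Sum.inl a) (Sum.inl b) := by
  refine ⟨{a, b}, ?_, by simp [zeroCellVerts], by simp [zeroCellVerts], h⟩
  have hpair := hitCount_union_le (D := D) (Q := {a}) (Q' := {b})
  rw [Set.singleton_union] at hpair
  linarith [(hitCount_singleton_le a).trans (hκ a), (hitCount_singleton_le b).trans (hκ b)]

lemma of_eq_or_adj (hκ : ∀ v, {j | v ∈ D j}.ncard ≤ κ) {a b : W} (h : a = b ∨ H.Adj a b) :
    S.HomologousHitting D (2 * κ) (Sum.inl a) (Sum.inl b) := by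
  refine of_homologousIn_pair hκ ?_
  rcases h with rfl | h
  · exact .refl _ _
  · exact .of_adj h (by simp) (by simp)

lemma of_face_eq (hκ : ∀ v, {j | v ∈ D j}.ncard ≤ κ) {f f' : Flag H}
    (h : S.face f = S.face f') :
    S.HomologousHitting D (2 * κ) (Sum.inl f.1.fst) (Sum.inl f'.1.fst) := by
  have hf := HomologousIn.of_flag (S := S) (Q := {f.1.fst, f'.1.fst}) f (by simp)
  rw [h] at hf
  exact of_homologousIn_pair hκ (hf.trans (HomologousIn.of_flag f' (by simp)).symm)

lemma of_flag (hκ : ∀ v, {j | v ∈ D j}.ncard ≤ κ) (f : Flag H) :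
    S.HomologousHitting D κ (Sum.inr (S.face f)) (Sum.inl f.1.fst) :=
  ⟨{f.1.fst}, (hitCount_singleton_le _).trans (hκ _), Set.empty_subset _, subset_rfl,
    (HomologousIn.of_flag f (Set.mem_singleton _)).symm⟩

end HomologousHitting

end HomologousHitting

section CuffedBramble

variable {W ι σ : Type*} {H : SimpleGraph W}

/-- A family `D` of connected, pairwise touching vertex sets in which every vertex lies in at most
`κ` members, and in at most one member unless it lies on a cuff. The vertices of a cuff lie on a
common face; `cuff v` is the cuff through `v`, if there is one. -/
structure CuffedBramble (S : EmbScheme H) (D : ι → Set W) (cuff : W → Option σ) (κ : ℕ) :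
    Prop where
  connectedOn : ∀ i, ConnectedOn H (D i)
  touch : ∀ i j, ∃ a ∈ D i, ∃ b ∈ D j, a = b ∨ H.Adj a b
  ncard_le : ∀ v, {j | v ∈ D j}.ncard ≤ κ
  ncard_le_one : ∀ v, cuff v = none → {j | v ∈ D j}.ncard ≤ 1
  exists_face_eq : ∀ u v r, cuff u = some r → cuff v = some r →
    ∃ p q : Flag H, p.1.fst = u ∧ q.1.fst = v ∧ S.face p = S.face q

/-- The part of `U` that lies on no cuffs other than those in `A`. -/
def cuffPart (cuff : W → Option σ) (U : Set W) (A : Finset σ) : Set W :=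
  {v ∈ U | ∀ r, cuff v = some r → r ∈ A}

variable {cuff : W → Option σ} {U : Set W} {A : Finset σ} {r : σ}

lemma cuffPart_univ [Fintype σ] : cuffPart cuff U Finset.univ = U := by
  simp [cuffPart]

variable [DecidableEq σ]

lemma mem_cuffPart_insert {v : W} (h : v ∈ cuffPart cuff U (insert r A)) :
    cuff v = some r ∨ v ∈ cuffPart cuff U A := by
  refine or_iff_not_imp_left.2 fun hv => ⟨h.1, fun r' hr' => ?_⟩
  rcases Finset.mem_insert.1 (h.2 r' hr') with rfl | hA
  · exact absurd hr' hv
  · exact hA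

lemma reachableIn_cuffPart_or_exists {p q : W} (hq : q ∈ cuffPart cuff U (insert r A))
    (h : ReachableIn H (cuffPart cuff U (insert r A)) p q) :
    (q ∈ cuffPart cuff U A ∧ ReachableIn H (cuffPart cuff U A) p q) ∨
    ∃ x, cuff x = some r ∧ (p = x ∨ ∃ x', ReachableIn H (cuffPart cuff U A) p x' ∧ H.Adj x' x) := by
  induction h using Relation.ReflTransGen.head_induction_on with
  | refl =>
    rcases mem_cuffPart_insert hq with h | h
    · exact Or.inr ⟨q, h, Or.inl rfl⟩
    · exact Or.inl ⟨h, .refl q⟩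
  | @head a b hab _ ih =>
    rcases mem_cuffPart_insert hab.2.1 with ha | ha
    · exact Or.inr ⟨a, ha, Or.inl rfl⟩
    rcases mem_cuffPart_insert hab.2.2 with hb | hb
    · exact Or.inr ⟨b, hb, Or.inr ⟨a, .refl a, hab.1⟩⟩
    have habA := ReachableIn.of_adj hab.1 ha hb
    rcases ih with ⟨hq, h⟩ | ⟨x, hx, rfl | ⟨x', h, h'⟩⟩
    · exact Or.inl ⟨hq, habA.trans h⟩
    · exact Or.inr ⟨b, hx, Or.inr ⟨a, .refl a, hab.1⟩⟩
    · exact Or.inr ⟨x, hx, Or.inr ⟨x', habA.trans h, h'⟩⟩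

end CuffedBramble

/-- A bound for the number of members of a bramble met by a 1-chain joining two vertices of one
member, where `n` is the number of cuffs and `κ` the multiplicity of the bramble. -/
def linkBound (κ : ℕ) : ℕ → ℕ
  | 0 => 1
  | n + 1 => 2 * (linkBound κ n + 2 * κ) + 2 * κ

/-- A bound for the number of members of a bramble met by a 1-chain joining a 0-cell to the root of
its component. -/
def rootBound (κ n : ℕ) : ℕ := 2 * linkBound κ n + 4 * κ

namespace CuffedBramble

section Links

variable {W ι σ : Type*} {H : SimpleGraph W} {S : EmbScheme H} {D : ι → Set W}
  {cuff : W → Option σ} {κ : ℕ}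

lemma exists_dart (h : S.CuffedBramble D cuff κ) (hκ : κ < Nat.card ι) (i : ι) :
    ∃ d : H.Dart, d.fst ∈ D i := by
  obtain ⟨v, hv, -⟩ := h.touch i i
  suffices ¬ H.IsIsolated v by
    obtain ⟨w, hw⟩ := not_forall_not.1 this
    exact ⟨⟨(v, w), hw⟩, hv⟩
  intro hiso
  have hall (j) : v ∈ D j := by
    obtain ⟨a, ha, b, hb, hab⟩ := h.touch i j
    have hva : v = a := by
      rcases (h.connectedOn i v hv a ha).cases_head with hva | ⟨c, hc, -⟩
      · exact hva
      · exact absurd hc.1 (hiso c)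
    rcases hab with rfl | hab
    · exact hva ▸ hb
    · exact absurd (hva ▸ hab) (hiso b)
  have hcard := h.ncard_le v
  rw [Set.eq_univ_of_forall (s := {j | v ∈ D j}) hall, Set.ncard_univ] at hcard
  exact hcard.not_gt hκ

lemma reachableIn_union (h : S.CuffedBramble D cuff κ) {i j : ι} {u v : W} (hu : u ∈ D i)
    (hv : v ∈ D j) : ReachableIn H (D i ∪ D j) u v := by
  obtain ⟨a, ha, b, hb, hab⟩ := h.touch i j
  have hua := (h.connectedOn i u hu a ha).mono (Set.subset_union_left (t := D j))
  have hbv := (h.connectedOn j b hb v hv).mono (Set.subset_union_right (s := D i))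
  rcases hab with rfl | hab
  · exact hua.trans hbv
  · exact (hua.trans (.of_adj hab (Or.inl ha) (Or.inr hb))).trans hbv

variable [Finite ι]

lemma hitCount_cuffPart_empty_le (h : S.CuffedBramble D cuff κ) (i : ι) :
    hitCount D (cuffPart cuff (D i) ∅) ≤ 1 := by
  rw [← Set.ncard_singleton i]
  refine Set.ncard_le_ncard ?_
  rintro j ⟨v, hj, hi, hv⟩
  have hnone : cuff v = none :=
    Option.eq_none_iff_forall_ne_some.2 fun r hr => Finset.notMem_empty r (hv r hr)
  exact (Set.ncard_le_one (Set.toFinite _)).1 (h.ncard_le_one v hnone) j hj i hi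

variable [Fintype W]

lemma homologousHitting_cuffPart (h : S.CuffedBramble D cuff κ) (i : ι) (A : Finset σ) {p q : W}
    (hp : p ∈ cuffPart cuff (D i) A) (hq : q ∈ cuffPart cuff (D i) A)
    (hpq : ReachableIn H (cuffPart cuff (D i) A) p q) :
    S.HomologousHitting D (linkBound κ A.card) (Sum.inl p) (Sum.inl q) := by
  classical
  induction A using Finset.induction_on generalizing p q with
  | empty =>
    exact ⟨_, h.hitCount_cuffPart_empty_le i, Set.singleton_subset_iff.2 hp,
      Set.singleton_subset_iff.2 hq, .of_reachableIn hpq⟩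
  | insert r A hrA ih =>
    rw [Finset.card_insert_of_notMem hrA, linkBound]
    have to_cuff {p x : W}
        (h' : p = x ∨ ∃ x', ReachableIn H (cuffPart cuff (D i) A) p x' ∧ H.Adj x' x) :
        S.HomologousHitting D (linkBound κ A.card + 2 * κ) (Sum.inl p) (Sum.inl x) := by
      rcases h' with rfl | ⟨x', hpx, hadj⟩
      · exact (HomologousHitting.of_eq_or_adj h.ncard_le (Or.inl rfl)).mono (by lia)
      · rcases hpx.eq_or_mem with rfl | ⟨hp, hx⟩
        · exact (HomologousHitting.of_eq_or_adj h.ncard_le (Or.inr hadj)).mono (by lia)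
        · exact (ih hp hx hpx).trans (.of_eq_or_adj h.ncard_le (Or.inr hadj))
    rcases reachableIn_cuffPart_or_exists hq hpq with ⟨hqA, hpqA⟩ | ⟨x, hx, hpx⟩
    · exact (ih (hpqA.symm.right_mem hqA) hqA hpqA).mono (by lia)
    · rcases reachableIn_cuffPart_or_exists hp hpq.symm with ⟨hpA, hqpA⟩ | ⟨y, hy, hqy⟩
      · exact (ih hpA (hqpA.symm.right_mem hpA) hqpA.symm).mono (by lia)
      · obtain ⟨f, f', rfl, rfl, hff⟩ := h.exists_face_eq x y r hx hy
        exact (((to_cuff hpx).trans (.of_face_eq h.ncard_le hff)).trans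
          (to_cuff hqy).symm).mono (by lia)

variable [Fintype σ]

lemma homologousHitting_of_mem (h : S.CuffedBramble D cuff κ) {i : ι} {p q : W} (hp : p ∈ D i)
    (hq : q ∈ D i) :
    S.HomologousHitting D (linkBound κ (Fintype.card σ)) (Sum.inl p) (Sum.inl q) := by
  have := h.homologousHitting_cuffPart i Finset.univ (p := p) (q := q)
  rw [cuffPart_univ] at this
  exact this hp hq (h.connectedOn i p hp q hq)

end Links

end CuffedBramble

end EmbScheme

namespace EmbScheme

section FundamentalClass

variable {W : Type*} {H : SimpleGraph W} {S : EmbScheme H}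

variable (S) in
/-- A multiple of the fundamental class modulo 2: the 2-chain with constant coefficients. -/
def fundamentalMultiple (c : ZMod 2) : S.twoChains := ⟨fun _ => c, rfl⟩

lemma boundaryTwo_fundamentalMultiple (c : ZMod 2) :
    S.boundaryTwo (S.fundamentalMultiple c) = 0 := by
  funext x
  rcases x with _ | _ <;> exact ZModModule.add_self c

end FundamentalClass

namespace CuffedBramble

section Roots

variable {W ι σ : Type*} [Fintype W] [Finite ι] {H : SimpleGraph W} {S : EmbScheme H}
  {D : ι → Set W} {cuff : W → Option σ} {κ : ℕ}

lemma exists_homologousHitting_mem (h : S.CuffedBramble D cuff κ) {v p : W} {i : ι}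
    (hp : p ∈ D i) (hvp : H.Reachable v p) :
    ∃ j, ∃ x ∈ D j, S.HomologousHitting D κ (Sum.inl v) (Sum.inl x) := by
  suffices ∃ j, ∃ x ∈ D j, ReachableIn H ({v | ∀ j, v ∉ D j} ∪ {x}) v x by
    obtain ⟨j, x, hx, hvx⟩ := this
    refine ⟨j, x, hx, {v | ∀ j, v ∉ D j} ∪ {x}, ?_, ?_, Set.subset_union_right, .of_reachableIn hvx⟩
    · refine hitCount_union_le.trans ?_
      have hfree : hitCount D {v | ∀ j, v ∉ D j} = 0 :=
        hitCount_eq_zero fun j => Set.disjoint_left.2 fun v hv hv' => hv' j hv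
      rw [hfree, zero_add]
      exact (hitCount_singleton_le x).trans (h.ncard_le x)
    · exact Set.singleton_subset_iff.2 (hvx.symm.right_mem (Or.inr rfl))
  obtain ⟨w⟩ := hvp
  induction w with
  | nil => exact ⟨i, _, hp, .refl _⟩
  | @cons a b _ hab _ ih =>
    by_cases ha : ∃ j, a ∈ D j
    · obtain ⟨j, hj⟩ := ha
      exact ⟨j, a, hj, .refl a⟩
    · obtain ⟨j, x, hx, hbx⟩ := ih hp
      exact ⟨j, x, hx, .trans
        (.of_adj hab (Or.inl (not_exists.1 ha)) (hbx.symm.right_mem (Or.inr rfl))) hbx⟩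

variable [Fintype σ]

lemma homologousHitting_of_reachable (h : S.CuffedBramble D cuff κ) {v p : W} {i : ι}
    (hp : p ∈ D i) (hvp : H.Reachable v p) :
    S.HomologousHitting D (2 * linkBound κ (Fintype.card σ) + 3 * κ) (Sum.inl v) (Sum.inl p) := by
  obtain ⟨j, x, hx, hvx⟩ := h.exists_homologousHitting_mem hp hvp
  obtain ⟨a, ha, b, hb, hab⟩ := h.touch j i
  exact (((hvx.trans (h.homologousHitting_of_mem hx ha)).trans (.of_eq_or_adj h.ncard_le hab)).trans
    (h.homologousHitting_of_mem hb hp)).mono (by lia)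

lemma exists_root (h : S.CuffedBramble D cuff κ) (C : H.ConnectedComponent) :
    ∃ w, ∀ v, H.connectedComponentMk v = C →
      S.HomologousHitting D (2 * linkBound κ (Fintype.card σ) + 3 * κ) (Sum.inl v) (Sum.inl w) := by
  by_cases hC : ∃ i, ∃ p ∈ D i, H.connectedComponentMk p = C
  · obtain ⟨i, p, hp, rfl⟩ := hC
    exact ⟨p, fun v hv => h.homologousHitting_of_reachable hp (ConnectedComponent.exact hv)⟩
  · obtain ⟨w, rfl⟩ := C.exists_rep
    refine ⟨w, fun v hv => ⟨{u | H.Reachable u w}, ?_, ?_, ?_, .of_reachableIn ?_⟩⟩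
    · refine (hitCount_eq_zero fun j => Set.disjoint_left.2 fun u hu huw => ?_).trans_le
        (Nat.zero_le _)
      exact hC ⟨j, u, hu, ConnectedComponent.sound huw⟩
    · exact Set.singleton_subset_iff.2 (ConnectedComponent.exact hv)
    · exact Set.singleton_subset_iff.2 (Reachable.refl w)
    · obtain ⟨p⟩ := ConnectedComponent.exact hv
      clear hv
      induction p with
      | nil => exact .refl _
      | cons hab p ih => exact .trans (.of_adj hab ⟨.cons hab p⟩ ⟨p⟩) (ih hC)

lemma exists_roots (h : S.CuffedBramble D cuff κ) :
    ∃ root : S.ZeroCell → S.ZeroCell, (∀ c, root (S.cellFst c) = root (S.cellSnd c)) ∧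
      ∀ p, S.HomologousHitting D (rootBound κ (Fintype.card σ)) p (root p) := by
  choose root hroot using h.exists_root
  let flagRoot (p : Flag H) : W := root (H.connectedComponentMk p.1.fst)
  have flagRoot_eq {p q : Flag H} (hpq : S.face p = S.face q) : flagRoot p = flagRoot q := by
    have hadj (d : H.Dart) : H.connectedComponentMk d.snd = H.connectedComponentMk d.fst :=
      ConnectedComponent.sound d.adj.symm.reachable
    refine S.eq_of_face_eq (fun p => congrArg root (hadj p.1)) (fun p => congrArg root ?_) hpq
    rw [← hadj p.1]
    exact congrArg _ (S.faceStep_fst p)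
  choose flagOf hflagOf using S.face_surjective
  refine ⟨Sum.elim (fun v => Sum.inl (root (H.connectedComponentMk v)))
    fun f => Sum.inl (flagRoot (flagOf f)), ?_, ?_⟩
  · rintro (e | d)
    · exact congrArg (Sum.inl <| root ·) (ConnectedComponent.sound (edgeDart e).adj.reachable)
    · exact congrArg Sum.inl (flagRoot_eq (hflagOf (S.face (d, true)))).symm
  · rintro (v | f)
    · exact (hroot _ v rfl).mono (by unfold rootBound; lia)
    · have hflag := HomologousHitting.of_flag (S := S) h.ncard_le (flagOf f)
      rw [hflagOf] at hflag
      exact (hflag.trans (hroot _ _ rfl)).mono (by unfold rootBound; lia)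

end Roots

section Normalize

variable {W ι σ : Type*} {H : SimpleGraph W} {S : EmbScheme H} {D : ι → Set W}
  {cuff : W → Option σ} {κ : ℕ}

lemma exists_boundaryTwo_eq_forall_disjoint (h : S.CuffedBramble D cuff κ) (y : S.twoChains)
    {Q : Set W} (hy : S.boundaryTwo y ∈ chainsIn H Q) :
    ∃ y' : S.twoChains, S.boundaryTwo y' = S.boundaryTwo y ∧
      ∀ j, Disjoint (D j) Q → ∀ p : Flag H, p.1.fst ∈ D j → y'.1 p = 0 := by
  have hconst {j j'} (hj : Disjoint (D j) Q) (hj' : Disjoint (D j') Q) {p q : Flag H}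
      (hp : p.1.fst ∈ D j) (hq : q.1.fst ∈ D j') : y.1 p = y.1 q := by
    refine apply_eq_of_reachableIn (N := D j ∪ D j') ?_ (Or.inl hp)
      (h.reachableIn_union hp hq) rfl rfl
    rintro c ⟨v, hv, hvD⟩
    exact hy c fun hc => Set.disjoint_left.1 (hj.union_left hj') hvD (hc hv)
  by_cases hex : ∃ j, Disjoint (D j) Q ∧ ∃ p : Flag H, p.1.fst ∈ D j
  · obtain ⟨j, hj, p, hp⟩ := hex
    refine ⟨y + S.fundamentalMultiple (y.1 p), ?_, fun j' hj' q hq => ?_⟩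
    · rw [map_add, boundaryTwo_fundamentalMultiple, add_zero]
    · exact CharTwo.add_eq_zero.2 (hconst hj' hj hq hp)
  · exact ⟨y, rfl, fun j hj p hp => absurd ⟨j, hj, p, hp⟩ hex⟩

end Normalize

end CuffedBramble

end EmbScheme

namespace EmbScheme

section Triangles

variable {W : Type*} {H : SimpleGraph W} (S : EmbScheme H)

/-- The dart indexing the 1-cell that joins the start of a flag to the centre of its face. -/
def corner (p : Flag H) : H.Dart := if p.2 then p.1 else S.rot.symm p.1

lemma corner_fst (p : Flag H) : (S.corner p).fst = p.1.fst := by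
  rcases p with ⟨d, _ | _⟩
  exacts [S.rot_symm_fst d, rfl]

lemma face_corner (p : Flag H) : S.face (S.corner p, true) = S.face p := by
  rcases p with ⟨d, _ | _⟩
  exacts [S.face_rot_symm d, rfl]

lemma cells_dartEdge (d : H.Dart) :
    (S.cellFst (Sum.inl (dartEdge d)) = Sum.inl d.fst ∧
      S.cellSnd (Sum.inl (dartEdge d)) = Sum.inl d.snd) ∨
    (S.cellFst (Sum.inl (dartEdge d)) = Sum.inl d.snd ∧
      S.cellSnd (Sum.inl (dartEdge d)) = Sum.inl d.fst) := by
  rcases edgeDart_dartEdge d with h | h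
  · exact Or.inl ⟨by rw [cellFst, h], by rw [cellSnd, h]⟩
  · exact Or.inr ⟨by rw [cellFst, h]; rfl, by rw [cellSnd, h]; rfl⟩

lemma cellFst_corner (p : Flag H) : S.cellFst (Sum.inr (S.corner p)) = Sum.inl p.1.fst :=
  congrArg Sum.inl (S.corner_fst p)

lemma cellSnd_corner (p : Flag H) : S.cellSnd (Sum.inr (S.corner p)) = Sum.inr (S.face p) :=
  congrArg Sum.inr (S.face_corner p)

/-- The triangle that contains a flag, as a 2-chain. -/
noncomputable def triangle (p : Flag H) : S.twoChains where
  val := unitChain p + unitChain (S.reverse p)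
  property := by
    refine mem_twoChains.2 fun q => ?_
    have hswap (a b : Flag H) : unitChain a (S.reverse b) = unitChain (S.reverse a) b :=
      unitChain_congr (Function.Involutive.eq_iff S.reverse_reverse)
    simp only [Pi.add_apply, hswap, reverse_reverse, add_comm]

/-- The sum of the values of `F` at the three sides of the triangle that contains a flag. -/
def triangleSum {M : Type*} [Add M] (F : OneCell H → M) (p : Flag H) : M :=
  F (Sum.inl (dartEdge p.1)) + F (Sum.inr (S.corner p)) + F (Sum.inr (S.corner (S.reverse p)))

variable {S}

lemma triangleSum_add {M : Type*} [AddCommMonoid M] (F F' : OneCell H → M) (p : Flag H) :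
    S.triangleSum (fun c => F c + F' c) p = S.triangleSum F p + S.triangleSum F' p := by
  simp only [triangleSum]
  abel

lemma triangleSum_endpoints {M : Type*} [AddCommGroup M] [Module (ZMod 2) M]
    (ρ : S.ZeroCell → M) (p : Flag H) :
    S.triangleSum (fun c => ρ (S.cellFst c) + ρ (S.cellSnd c)) p = 0 := by
  have hedge : ρ (S.cellFst (Sum.inl (dartEdge p.1))) + ρ (S.cellSnd (Sum.inl (dartEdge p.1))) =
      ρ (Sum.inl p.1.fst) + ρ (Sum.inl p.1.snd) := by
    rcases S.cells_dartEdge p.1 with ⟨h, h'⟩ | ⟨h, h'⟩ <;> rw [h, h']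
    exact add_comm _ _
  have hsnd : ρ (S.cellFst (Sum.inr (S.corner (S.reverse p)))) = ρ (Sum.inl p.1.snd) := by
    rw [cellFst_corner]; rfl
  rw [triangleSum, hedge, hsnd, cellFst_corner, cellSnd_corner, cellSnd_corner, face_reverse,
    add_assoc, add_comm (ρ (Sum.inl p.1.snd)) (ρ (Sum.inr _)), ZModModule.add_add_add_cancel,
    ZModModule.add_self]

lemma unitChain_apply_edge (p : Flag H) (d : H.Dart) :
    unitChain p (d, false) + unitChain p (d, true) = unitChain p.1 d := by
  rcases p with ⟨d', _ | _⟩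
  · rw [unitChain_of_ne (x := (d, true)) (by simp), add_zero]
    exact unitChain_congr (by simp)
  · rw [unitChain_of_ne (x := (d, false)) (by simp), zero_add]
    exact unitChain_congr (by simp)

lemma unitChain_apply_corner (p : Flag H) (d : H.Dart) :
    unitChain p (d, true) + unitChain p (S.rot d, false) = unitChain (S.corner p) d := by
  rcases p with ⟨d', _ | _⟩
  · rw [unitChain_of_ne (by simp), zero_add]
    exact unitChain_congr (by simp [corner, Equiv.eq_symm_apply])
  · rw [unitChain_of_ne (x := (S.rot d, false)) (by simp), add_zero]
    exact unitChain_congr (by simp [corner])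

lemma unitChain_add_unitChain_symm_edgeDart (d : H.Dart) (e : H.edgeSet) :
    unitChain d (edgeDart e) + unitChain d.symm (edgeDart e) = unitChain (dartEdge d) e := by
  rcases eq_or_ne e (dartEdge d) with rfl | he
  · rw [unitChain_self]
    rcases edgeDart_dartEdge d with h | h <;> rw [h, unitChain_self, unitChain_of_ne]
    exacts [add_zero _, (Dart.symm_ne d).symm, zero_add _, Dart.symm_ne d]
  · have hd : dartEdge (edgeDart e) ≠ dartEdge d := by rwa [dartEdge_edgeDart]
    rw [Ne, dartEdge_eq_iff, not_or] at hd
    rw [unitChain_of_ne hd.1, unitChain_of_ne hd.2, unitChain_of_ne he, add_zero]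

lemma boundaryTwo_triangle (p : Flag H) :
    S.boundaryTwo (S.triangle p) = S.triangleSum unitChain p := by
  funext c
  rcases c with e | d
  · have hinr (d : H.Dart) : unitChain (Sum.inr d : OneCell H) (Sum.inl e) = 0 :=
      unitChain_of_ne Sum.inl_ne_inr
    have hinl : unitChain (Sum.inl (dartEdge p.1) : OneCell H) (Sum.inl e) =
        unitChain (dartEdge p.1) e :=
      unitChain_congr Sum.inl_injective.eq_iff
    simp only [boundaryTwo_edge, triangle, triangleSum, Pi.add_apply, hinr, hinl, add_zero]
    rw [add_add_add_comm, unitChain_apply_edge, unitChain_apply_edge,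
      ← unitChain_add_unitChain_symm_edgeDart, reverse]
  · have hinr (d' : H.Dart) : unitChain (Sum.inr d' : OneCell H) (Sum.inr d) = unitChain d' d :=
      unitChain_congr Sum.inr_injective.eq_iff
    have hinl : unitChain (Sum.inl (dartEdge p.1) : OneCell H) (Sum.inr d) = 0 :=
      unitChain_of_ne Sum.inr_ne_inl
    simp only [boundaryTwo_corner, triangle, triangleSum, Pi.add_apply, hinr, hinl, zero_add]
    rw [add_add_add_comm, unitChain_apply_corner, unitChain_apply_corner]

open scoped Classical in
lemma sum_triangleSum [Fintype W] {M : Type*} [AddCommGroup M] [Module (ZMod 2) M]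
    (F : OneCell H → M) :
    ∑ e : H.edgeSet, ∑ b : Bool, S.triangleSum F (edgeDart e, b) = 0 := by
  have hedge (e : H.edgeSet) : ∑ _b : Bool, F (Sum.inl e) = 0 := by
    rw [Fintype.sum_bool, ZModModule.add_self]
  have hcorner : ∑ p : Flag H, F (Sum.inr (S.corner p)) = 0 := by
    rw [Fintype.sum_prod_type_right, Fintype.sum_bool]
    have hfalse : ∑ d : H.Dart, F (Sum.inr (S.corner (d, false))) = ∑ d : H.Dart, F (Sum.inr d) :=
      Equiv.sum_comp S.rot.symm fun d => F (Sum.inr d)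
    rw [hfalse]
    exact ZModModule.add_self _
  simp only [triangleSum, dartEdge_edgeDart, add_assoc, Finset.sum_add_distrib, hedge]
  simp only [← Finset.sum_add_distrib, zero_add]
  rw [← sum_flag_eq_sum_edge S fun p => F (Sum.inr (S.corner p)), hcorner]

open scoped Classical in
lemma sum_triangle_apply [Fintype W] (q : Flag H) :
    ∑ e : H.edgeSet, ∑ b : Bool, (S.triangle (edgeDart e, b)).1 q = 1 := by
  calc ∑ e : H.edgeSet, ∑ b : Bool, (S.triangle (edgeDart e, b)).1 q
      = ∑ p : Flag H, unitChain p q := (sum_flag_eq_sum_edge S fun p => unitChain p q).symm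
    _ = unitChain q q := Fintype.sum_eq_single q fun p hp => unitChain_of_ne hp.symm
    _ = 1 := unitChain_self q

lemma exists_triangleSum_add_triangle_ne_zero [Finite W] (Y : OneCell H → S.twoChains)
    (q : Flag H) : ∃ p, (S.triangleSum Y p + S.triangle p).1 q ≠ 0 := by
  classical
  cases nonempty_fintype W
  by_contra! hzero
  refine one_ne_zero (α := ZMod 2) ?_
  calc (1 : ZMod 2)
      = (∑ e : H.edgeSet, ∑ b, S.triangleSum Y (edgeDart e, b)).1 q +
        ∑ e : H.edgeSet, ∑ b, (S.triangle (edgeDart e, b)).1 q := by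
        rw [sum_triangleSum, sum_triangle_apply]
        rfl
    _ = ∑ e : H.edgeSet, ∑ b,
        (S.triangleSum Y (edgeDart e, b) + S.triangle (edgeDart e, b)).1 q := by
        simp only [AddSubmonoidClass.coe_finsetSum, Finset.sum_apply, Submodule.coe_add,
          Pi.add_apply, Finset.sum_add_distrib]
    _ = 0 := by simp only [hzero, Finset.sum_const_zero]

end Triangles

end EmbScheme

namespace EmbScheme

section RootedCycles

variable {W : Type*} {H : SimpleGraph W} {S : EmbScheme H}
  {ρ : S.ZeroCell → OneCell H → ZMod 2} {root : S.ZeroCell → S.ZeroCell} {Q : S.ZeroCell → Set W}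

variable (ρ) in
/-- The cycle that runs from a root to a 1-cell along `ρ`, through the cell, and back along `ρ`. -/
noncomputable def rootedCycle (c : OneCell H) : OneCell H → ZMod 2 :=
  unitChain c + (ρ (S.cellFst c) + ρ (S.cellSnd c))

lemma cellVerts_subset (hQ : ∀ p, zeroCellVerts p ⊆ Q p) (c : OneCell H) :
    cellVerts c ⊆ Q (S.cellFst c) ∪ Q (S.cellSnd c) := by
  rcases c with e | d
  · intro v hv
    rw [cellVerts, Set.mem_ofPred, ← dartEdge_edgeDart e] at hv
    rcases Sym2.mem_iff.1 hv with rfl | rfl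
    · exact Or.inl (hQ (Sum.inl _) rfl)
    · exact Or.inr (hQ (Sum.inl _) rfl)
  · exact (hQ (Sum.inl d.fst)).trans Set.subset_union_left

lemma rootedCycle_mem_chainsIn (hQ : ∀ p, zeroCellVerts p ⊆ Q p) (hρ : ∀ p, ρ p ∈ chainsIn H (Q p))
    (c : OneCell H) :
    rootedCycle ρ c ∈ chainsIn H (Q (S.cellFst c) ∪ Q (S.cellSnd c)) :=
  add_mem (unitChain_mem_chainsIn (cellVerts_subset hQ c))
    (add_mem (chainsIn_mono Set.subset_union_left (hρ _))
      (chainsIn_mono Set.subset_union_right (hρ _)))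

lemma triangleSum_rootedCycle (p : Flag H) :
    S.triangleSum (rootedCycle ρ) p = S.triangleSum unitChain p := by
  have h := triangleSum_add (S := S) unitChain (fun c => ρ (S.cellFst c) + ρ (S.cellSnd c)) p
  rwa [triangleSum_endpoints, add_zero] at h

lemma triangleSum_add_triangle_apply_eq_zero {Y : OneCell H → S.twoChains} {A T : Set W}
    (hQ : ∀ p, zeroCellVerts p ⊆ Q p)
    (hY : ∀ c, Disjoint A (Q (S.cellFst c) ∪ Q (S.cellSnd c) ∪ T) →
      ∀ q : Flag H, q.1.fst ∈ A → (Y c).1 q = 0) {p q : Flag H}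
    (hA : Disjoint A (Q (Sum.inl p.1.fst) ∪ Q (Sum.inl p.1.snd) ∪ Q (Sum.inr (S.face p)) ∪ T))
    (hq : q.1.fst ∈ A) : (S.triangleSum Y p + S.triangle p).1 q = 0 := by
  simp only [Set.disjoint_union_right] at hA hY
  obtain ⟨⟨⟨hu, hv⟩, hf⟩, hT⟩ := hA
  have hside (c) (h₁ : Disjoint A (Q (S.cellFst c))) (h₂ : Disjoint A (Q (S.cellSnd c))) :
      (Y c).1 q = 0 := hY c ⟨⟨h₁, h₂⟩, hT⟩ q hq
  have hsum : (S.triangleSum Y p).1 q = 0 := by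
    have hedge : (Y (Sum.inl (dartEdge p.1))).1 q = 0 := by
      rcases S.cells_dartEdge p.1 with ⟨h₁, h₂⟩ | ⟨h₁, h₂⟩
      exacts [hside _ (h₁ ▸ hu) (h₂ ▸ hv), hside _ (h₁ ▸ hv) (h₂ ▸ hu)]
    have hcorner := hside _ (S.cellFst_corner p ▸ hu) (S.cellSnd_corner p ▸ hf)
    have hcorner' := hside _ (S.cellFst_corner (S.reverse p) ▸ hv)
      (S.cellSnd_corner (S.reverse p) ▸ S.face_reverse p ▸ hf)
    simp only [triangleSum, Submodule.coe_add, Pi.add_apply, hedge, hcorner, hcorner', add_zero]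
  have htriangle : (S.triangle p).1 q = 0 := by
    have hp : q ≠ p := by
      rintro rfl
      exact Set.disjoint_left.1 hu hq (hQ (Sum.inl _) rfl)
    have hrev : q ≠ S.reverse p := by
      rintro rfl
      exact Set.disjoint_left.1 hv hq (hQ (Sum.inl _) rfl)
    exact (congrArg₂ _ (unitChain_of_ne hp) (unitChain_of_ne hrev)).trans (add_zero 0)
  exact (congrArg₂ _ hsum htriangle).trans (add_zero 0)

variable [Fintype W]

lemma rootedCycle_mem_ker (hroot : ∀ c, root (S.cellFst c) = root (S.cellSnd c))
    (hρ : ∀ p, S.boundaryOne (ρ p) = unitChain p + unitChain (root p)) (c : OneCell H) :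
    rootedCycle ρ c ∈ LinearMap.ker S.boundaryOne := by
  rw [LinearMap.mem_ker, rootedCycle, map_add, map_add, boundaryOne_unitChain, hρ, hρ, hroot,
    add_comm (unitChain (S.cellSnd c)), ZModModule.add_add_add_cancel, ZModModule.add_self]

end RootedCycles

namespace CuffedBramble

variable {W ι σ : Type*} [Finite W] [Finite ι] [Fintype σ] {H : SimpleGraph W} {S : EmbScheme H}
  {D : ι → Set W} {cuff : W → Option σ} {κ g : ℕ}

/-- Up to at most `g` exceptional cells, whose chains are collected in `T`, every rooted cycle
bounds; the 2-chain `Y c` fills the one through `c`. -/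
lemma exists_fillings (h : S.CuffedBramble D cuff κ) (hg : S.GenusLE g) :
    ∃ (Q : S.ZeroCell → Set W) (T : Set W) (Y : OneCell H → S.twoChains),
      (∀ p, zeroCellVerts p ⊆ Q p) ∧ (∀ p, hitCount D (Q p) ≤ rootBound κ (Fintype.card σ)) ∧
      hitCount D T ≤ g * (2 * rootBound κ (Fintype.card σ)) ∧
      (∀ c j, Disjoint (D j) (Q (S.cellFst c) ∪ Q (S.cellSnd c) ∪ T) →
        ∀ p : Flag H, p.1.fst ∈ D j → (Y c).1 p = 0) ∧
      ∀ p, S.boundaryTwo (S.triangleSum Y p + S.triangle p) = 0 := by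
  classical
  cases nonempty_fintype W
  obtain ⟨root, hroot, hhom⟩ := h.exists_roots
  choose Q hcount hQ _ ρ hρQ hρ using hhom
  obtain ⟨X, hX, hdisj, hfill⟩ := exists_disjoint_span_of_finrank_le
    (B := LinearMap.range S.boundaryTwo) (Z := LinearMap.ker S.boundaryOne)
    (by rintro _ ⟨y, rfl⟩; exact boundaryOne_boundaryTwo y) (finrank_ker_boundaryOne_le hg)
    (rootedCycle_mem_ker hroot hρ)
  choose z hz y hy using hfill
  let R (c : OneCell H) : Set W := Q (S.cellFst c) ∪ Q (S.cellSnd c)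
  have hR (c) : rootedCycle ρ c ∈ chainsIn H (R c) := rootedCycle_mem_chainsIn hQ hρQ c
  have hspan : Submodule.span (ZMod 2) (rootedCycle ρ '' X) ≤ chainsIn H (⋃ x ∈ X, R x) := by
    refine Submodule.span_le.2 ?_
    rintro _ ⟨x, hx, rfl⟩
    exact chainsIn_mono (Set.subset_biUnion_of_mem hx) (hR x)
  have hyR (c) : S.boundaryTwo (y c) ∈ chainsIn H (R c ∪ ⋃ x ∈ X, R x) :=
    hy c ▸ add_mem (chainsIn_mono Set.subset_union_left (hR c))
      (chainsIn_mono Set.subset_union_right (hspan (hz c)))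
  choose Y hY hYdisj using fun c => h.exists_boundaryTwo_eq_forall_disjoint (y c) (hyR c)
  refine ⟨Q, ⋃ x ∈ X, R x, Y, hQ, hcount, ?_, hYdisj, fun p => ?_⟩
  · refine (hitCount_biUnion_le X fun x _ => ?_).trans (Nat.mul_le_mul_right _ hX)
    exact (two_mul (rootBound κ (Fintype.card σ)) ▸ hitCount_union_le.trans
      (add_le_add (hcount _) (hcount _)) :)
  · refine Submodule.disjoint_def.1 hdisj _ ?_ ⟨_, rfl⟩
    have hsum : S.boundaryTwo (S.triangleSum Y p) =
        S.triangleSum (fun c => rootedCycle ρ c + z c) p := by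
      simp only [triangleSum, map_add, hY, hy]
    rw [map_add, hsum, triangleSum_add, triangleSum_rootedCycle, boundaryTwo_triangle,
      add_right_comm, ZModModule.add_self, zero_add]
    exact add_mem (add_mem (hz _) (hz _)) (hz _)

theorem card_le (h : S.CuffedBramble D cuff κ) (hg : S.GenusLE g) :
    Nat.card ι ≤ κ + (3 + 2 * g) * rootBound κ (Fintype.card σ) := by
  by_contra! hcard
  obtain ⟨Q, T, Y, hQ, hcount, hT, hY, hcycle⟩ := h.exists_fillings hg
  have exists_dart := h.exists_dart ((Nat.le_add_right _ _).trans_lt hcard)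
  have hι : 0 < Nat.card ι := (Nat.zero_le _).trans_lt hcard
  obtain ⟨i⟩ := (Nat.card_pos_iff.1 hι).1
  obtain ⟨d, hd⟩ := exists_dart i
  obtain ⟨p, hp⟩ := exists_triangleSum_add_triangle_ne_zero Y (d, true)
  let Z := Q (Sum.inl p.1.fst) ∪ Q (Sum.inl p.1.snd) ∪ Q (Sum.inr (S.face p)) ∪ T
  have hZ : hitCount D Z < Nat.card ι := by
    have hU := hitCount_union_le (D := D) (Q := Q (Sum.inl p.1.fst)) (Q' := Q (Sum.inl p.1.snd))
    have hU' := hitCount_union_le (D := D) (Q := Q (Sum.inl p.1.fst) ∪ Q (Sum.inl p.1.snd))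
      (Q' := Q (Sum.inr (S.face p)))
    have hUT : hitCount D Z ≤ _ + _ := hitCount_union_le
    linarith [hcount (Sum.inl p.1.fst), hcount (Sum.inl p.1.snd), hcount (Sum.inr (S.face p))]
  obtain ⟨j, hj⟩ := exists_disjoint_of_hitCount_lt hZ
  obtain ⟨d', hd'⟩ := exists_dart j
  have hzero : (S.triangleSum Y p + S.triangle p).1 (d', true) = 0 :=
    triangleSum_add_triangle_apply_eq_zero hQ (fun c hc q => hY c j hc q) hj hd'
  exact hp (hzero ▸ apply_eq_of_reachableIn (fun c _ => congrFun (hcycle p) c) (Or.inl hd)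
    (h.reachableIn_union hd hd') rfl rfl)

end CuffedBramble

end EmbScheme

/-! ### Clique minors of almost-embeddable graphs -/

lemma ConnectedOn.biUnion {V W : Type*} {G : SimpleGraph V} {H : SimpleGraph W} {U : Set V}
    {tr : V → Set W} (hU : ConnectedOn G U) (htr : ∀ x ∈ U, ConnectedOn H (tr x))
    (htouch : ∀ x ∈ U, ∀ y ∈ U, G.Adj x y → ∃ a ∈ tr x, ∃ b ∈ tr y, a = b ∨ H.Adj a b) :
    ConnectedOn H (⋃ x ∈ U, tr x) := by
  intro a ha b hb
  obtain ⟨x, hx, hax⟩ := Set.mem_iUnion₂.1 ha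
  obtain ⟨y, hy, hby⟩ := Set.mem_iUnion₂.1 hb
  have inside {z a b} (hz : z ∈ U) (ha : a ∈ tr z) (hb : b ∈ tr z) :
      ReachableIn H (⋃ x ∈ U, tr x) a b :=
    (htr z hz a ha b hb).mono (Set.subset_biUnion_of_mem (u := tr) hz)
  clear ha hb
  induction hU x hx y hy generalizing b with
  | refl => exact inside hx hax hby
  | @tail y z _ hyz ih =>
    obtain ⟨c, hc, c', hc', hcc'⟩ := htouch y hyz.2.1 z hyz.2.2 hyz.1
    have hc'b := inside hyz.2.2 hc' hby
    rcases hcc' with rfl | hadj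
    · exact (ih _ hyz.2.1 hc).trans hc'b
    · exact ((ih _ hyz.2.1 hc).trans (.of_adj hadj (Set.mem_biUnion hyz.2.1 hc)
        (Set.mem_biUnion hyz.2.2 hc'))).trans hc'b

lemma ncard_setOf_mem_biUnion_le {V W ι : Type*} [Finite V] {U : ι → Set V}
    (hU : Pairwise (Function.onFun Disjoint U)) (tr : V → Set W) (w : W) :
    {j | w ∈ ⋃ x ∈ U j, tr x}.ncard ≤ {x | w ∈ tr x}.ncard := by
  have hex (j : {j | w ∈ ⋃ x ∈ U j, tr x}) : ∃ x ∈ U j, w ∈ tr x := by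
    simpa only [Set.mem_iUnion₂, exists_prop] using Set.mem_iUnion₂.1 j.2
  choose f hfU hf using hex
  refine Nat.card_le_card_of_injective (fun j => (⟨f j, hf j⟩ : {x | w ∈ tr x})) fun i j hij => ?_
  by_contra hne
  have hfij : f i = f j := congrArg Subtype.val hij
  exact Set.disjoint_left.1 (hU fun h => hne (Subtype.ext h)) (hfU i) (hfij ▸ hfU j)

lemma exists_choice_of_mem {W ι : Type*} (C : ι → Set W) : ∃ c : W → Option ι,
    (∀ w r, c w = some r → w ∈ C r) ∧ ∀ w, c w = none → ∀ r, w ∉ C r := by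
  have hex (w : W) : ∃ o : Option ι, (∀ r, o = some r → w ∈ C r) ∧ (o = none → ∀ r, w ∉ C r) := by
    by_cases hw : ∃ r, w ∈ C r
    · obtain ⟨r, hr⟩ := hw
      exact ⟨some r, fun _ h => Option.some.inj h ▸ hr, nofun⟩
    · exact ⟨none, nofun, fun _ => not_exists.1 hw⟩
  choose c hsome hnone using hex
  exact ⟨c, hsome, hnone⟩

/-- A model of a complete graph as a minor of `G`: the branch sets `U i` are nonempty, connected,
disjoint and pairwise adjacent. -/
structure IsCliqueModel {V ι : Type*} (G : SimpleGraph V) (U : ι → Set V) : Prop where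
  nonempty : ∀ i, (U i).Nonempty
  connectedOn : ∀ i, ConnectedOn G (U i)
  disjoint : Pairwise (Function.onFun Disjoint U)
  adj : ∀ i j, i ≠ j → ∃ a ∈ U i, ∃ b ∈ U j, G.Adj a b

lemma EmbScheme.IsFacialCycle.exists_face_eq {W : Type*} {H : SimpleGraph W} {S : EmbScheme H}
    {m : ℕ} {e : ZMod m → W} {hadj : ∀ x, H.Adj (e x) (e (x + 1))}
    (h : S.IsFacialCycle e hadj) (x y : ZMod m) :
    ∃ p q : Flag H, p.1.fst = e x ∧ q.1.fst = e y ∧ S.face p = S.face q := by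
  obtain ⟨b, hb⟩ := h
  let flag (x : ZMod m) : Flag H := (⟨(e x, e (x + 1)), hadj x⟩, b x)
  have hper : Function.Periodic (fun x => S.face (flag x)) 1 := fun x =>
    (congrArg S.face (hb x)).symm.trans (S.face_faceStep (flag x))
  have hconst (x : ZMod m) : S.face (flag x) = S.face (flag 0) := by
    obtain ⟨n, rfl⟩ := ZMod.intCast_surjective x
    have h := hper.zsmul_eq n
    rwa [zsmul_one] at h
  exact ⟨flag x, flag y, rfl, rfl, (hconst x).trans (hconst y).symm⟩

section VortexSystem

variable {V ι : Type*} {G : SimpleGraph V}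

/-- Pairwise disjoint vortices `Gv i` attached to `G₀` along the cycles `e i`, with cycle
representations `model i` of width less than `k`. -/
structure VortexSystem (G₀ : G.Subgraph) (Gv : ι → G.Subgraph) {m : ι → ℕ}
    (e : ∀ i, ZMod (m i) → G₀.verts) (model : ∀ i, (Gv i).verts → Set (ZMod (m i))) (k : ℕ) :
    Prop where
  disjoint : ∀ i j, i ≠ j → Disjoint (Gv i).verts (Gv j).verts
  adj : ∀ i x, G₀.coe.Adj (e i x) (e i (x + 1))
  injective : ∀ i, Function.Injective (e i)
  verts_inter : ∀ i, (Gv i).verts ∩ G₀.verts = Subtype.val '' Set.range (e i)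
  connected : ∀ i v, ((ringGraph (m i)).induce (model i v)).Connected
  mem_model : ∀ i x (v : (Gv i).verts), (e i x : V) = v → x ∈ model i v
  adj_meet : ∀ i ⦃u v⦄, (Gv i).coe.Adj u v → (model i u ∩ model i v).Nonempty
  ncard_le : ∀ i t, {v | t ∈ model i v}.ncard ≤ k

/-- The vertices of `G₀` that stand for a vertex of `G`: the vertices of the model of a vortex
vertex, and the vertex itself otherwise. -/
def vortexTrace {G₀ : G.Subgraph} {Gv : ι → G.Subgraph} {m : ι → ℕ}
    (e : ∀ i, ZMod (m i) → G₀.verts) (model : ∀ i, (Gv i).verts → Set (ZMod (m i))) (x : V) :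
    Set G₀.verts :=
  {w | w = x ∨ ∃ (i : ι) (hx : x ∈ (Gv i).verts), ∃ t ∈ model i ⟨x, hx⟩, w = e i t}

namespace VortexSystem

variable {G₀ : G.Subgraph} {Gv : ι → G.Subgraph} {m : ι → ℕ} {e : ∀ i, ZMod (m i) → G₀.verts}
  {model : ∀ i, (Gv i).verts → Set (ZMod (m i))} {k : ℕ} {i j : ι} {x y : V} {w : G₀.verts}

lemma eq_of_mem (h : VortexSystem G₀ Gv e model k) (hi : x ∈ (Gv i).verts)
    (hj : x ∈ (Gv j).verts) : i = j :=
  not_imp_comm.1 (h.disjoint i j) (Set.not_disjoint_iff.2 ⟨x, hi, hj⟩)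

lemma coe_mem_verts (h : VortexSystem G₀ Gv e model k) (t : ZMod (m i)) :
    (e i t : V) ∈ (Gv i).verts := by
  have ht : (e i t : V) ∈ Subtype.val '' Set.range (e i) := ⟨e i t, ⟨t, rfl⟩, rfl⟩
  rw [← h.verts_inter] at ht
  exact ht.1

lemma mem_vortexTrace_iff (h : VortexSystem G₀ Gv e model k) (hx : x ∈ (Gv i).verts) :
    w ∈ vortexTrace e model x ↔ ∃ t ∈ model i ⟨x, hx⟩, w = e i t := by
  refine ⟨?_, fun ⟨t, ht, hw⟩ => Or.inr ⟨i, hx, t, ht, hw⟩⟩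
  rintro (rfl | ⟨j, hj, t, ht, rfl⟩)
  · have hw : (w : V) ∈ (Gv i).verts ∩ G₀.verts := ⟨hx, w.2⟩
    rw [h.verts_inter] at hw
    obtain ⟨_, ⟨t, rfl⟩, ht⟩ := hw
    exact ⟨t, h.mem_model i t _ ht, (Subtype.ext ht).symm⟩
  · obtain rfl := h.eq_of_mem hx hj
    exact ⟨t, ht, rfl⟩

lemma vortexTrace_nonempty (h : VortexSystem G₀ Gv e model k) (hx : x ∈ (G₀ ⊔ ⨆ i, Gv i).verts) :
    (vortexTrace e model x).Nonempty := by
  rw [Subgraph.verts_sup, Subgraph.verts_iSup] at hx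
  rcases hx with hx | hx
  · exact ⟨⟨x, hx⟩, Or.inl rfl⟩
  · obtain ⟨i, hi⟩ := Set.mem_iUnion.1 hx
    obtain ⟨t⟩ := (h.connected i ⟨x, hi⟩).nonempty
    exact ⟨e i t, Or.inr ⟨i, hi, t, t.2, rfl⟩⟩

lemma exists_touch_vortexTrace (h : VortexSystem G₀ Gv e model k)
    (hxy : (G₀ ⊔ ⨆ i, Gv i).Adj x y) :
    ∃ a ∈ vortexTrace e model x, ∃ b ∈ vortexTrace e model y, a = b ∨ G₀.coe.Adj a b := by
  rw [Subgraph.sup_adj, Subgraph.iSup_adj] at hxy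
  rcases hxy with hxy | ⟨i, hxy⟩
  · exact ⟨⟨x, hxy.fst_mem⟩, Or.inl rfl, ⟨y, hxy.snd_mem⟩, Or.inl rfl, Or.inr hxy⟩
  · obtain ⟨t, hx, hy⟩ := h.adj_meet i (u := ⟨x, hxy.fst_mem⟩) (v := ⟨y, hxy.snd_mem⟩) hxy
    exact ⟨e i t, Or.inr ⟨i, _, t, hx, rfl⟩, e i t, Or.inr ⟨i, _, t, hy, rfl⟩, Or.inl rfl⟩

lemma connectedOn_vortexTrace (h : VortexSystem G₀ Gv e model k) (x : V) :
    ConnectedOn G₀.coe (vortexTrace e model x) := by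
  intro a ha b hb
  by_cases hex : ∃ i, x ∈ (Gv i).verts
  · obtain ⟨i, hx⟩ := hex
    obtain ⟨t, ht, rfl⟩ := (h.mem_vortexTrace_iff hx).1 ha
    obtain ⟨t', ht', rfl⟩ := (h.mem_vortexTrace_iff hx).1 hb
    obtain ⟨p⟩ := (h.connected i ⟨x, hx⟩).preconnected ⟨t, ht⟩ ⟨t', ht'⟩
    have hmem (u : model i ⟨x, hx⟩) : e i u ∈ vortexTrace e model x :=
      (h.mem_vortexTrace_iff hx).2 ⟨u, u.2, rfl⟩
    have hwalk {u v} (p : ((ringGraph (m i)).induce (model i ⟨x, hx⟩)).Walk u v) :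
        ReachableIn G₀.coe (vortexTrace e model x) (e i u) (e i v) := by
      induction p with
      | nil => exact .refl _
      | @cons u v _ huv _ ih =>
        refine .trans (.of_adj ?_ (hmem u) (hmem v)) ih
        have huv' : (ringGraph (m i)).Adj u v := huv
        rcases ((fromRel_adj _ _ _).1 huv').2 with hv | hu
        · exact hv ▸ h.adj i u
        · exact hu ▸ (h.adj i v).symm
    exact hwalk p
  · have eq_of_mem {c} (hc : c ∈ vortexTrace e model x) : (c : V) = x :=
      hc.resolve_right fun ⟨i, hi, _⟩ => hex ⟨i, hi⟩
    rw [Subtype.ext ((eq_of_mem ha).trans (eq_of_mem hb).symm)]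
    exact .refl b

lemma ncard_setOf_mem_vortexTrace_le [Finite V] (h : VortexSystem G₀ Gv e model k)
    (t : ZMod (m i)) : {x | e i t ∈ vortexTrace e model x}.ncard ≤ k := by
  refine le_trans ?_ (h.ncard_le i t)
  rw [← Set.ncard_image_of_injective _ Subtype.val_injective]
  refine Set.ncard_le_ncard fun x hx => ?_
  have hxi : x ∈ (Gv i).verts := by
    rcases hx with hx | ⟨j, hj, t', -, ht'⟩
    · exact hx ▸ h.coe_mem_verts t
    · exact h.eq_of_mem (ht' ▸ h.coe_mem_verts t') (h.coe_mem_verts t) ▸ hj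
  obtain ⟨t', ht', htt'⟩ := (h.mem_vortexTrace_iff hxi).1 hx
  exact ⟨⟨x, hxi⟩, h.injective i htt' ▸ ht', rfl⟩

lemma ncard_setOf_mem_vortexTrace_le_one [Finite V] (hw : ∀ i, w ∉ Set.range (e i)) :
    {x | w ∈ vortexTrace e model x}.ncard ≤ 1 := by
  have eq_of_mem {x} (hx : w ∈ vortexTrace e model x) : (w : V) = x :=
    hx.resolve_right fun ⟨i, _, t, _, ht⟩ => hw i ⟨t, ht.symm⟩
  exact (Set.ncard_le_one (Set.toFinite _)).2 fun x hx y hy =>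
    (eq_of_mem hx).symm.trans (eq_of_mem hy)

variable {κ : Type*} {U : κ → Set V} {S : EmbScheme G₀.coe}

lemma exists_cuffedBramble [Finite V] (h : VortexSystem G₀ Gv e model k)
    (hS : ∀ i, S.IsFacialCycle (e i) (h.adj i)) (hU : IsCliqueModel G U)
    (hverts : ∀ j, U j ⊆ (G₀ ⊔ ⨆ i, Gv i).verts)
    (hadj : ∀ i j, ∀ x ∈ U i, ∀ y ∈ U j, G.Adj x y → (G₀ ⊔ ⨆ i, Gv i).Adj x y) :
    ∃ cuff : G₀.verts → Option ι,
      S.CuffedBramble (fun j => ⋃ x ∈ U j, vortexTrace e model x) cuff (k + 1) := by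
  obtain ⟨cuff, hsome, hnone⟩ := exists_choice_of_mem fun i => Set.range (e i)
  have hone (w) (hw : cuff w = none) :
      {j | w ∈ ⋃ x ∈ U j, vortexTrace e model x}.ncard ≤ 1 :=
    (ncard_setOf_mem_biUnion_le hU.disjoint _ w).trans
      (ncard_setOf_mem_vortexTrace_le_one (hnone w hw))
  refine ⟨cuff, fun j => (hU.connectedOn j).biUnion (fun x _ => h.connectedOn_vortexTrace x)
    fun x hx y hy hxy => h.exists_touch_vortexTrace (hadj j j x hx y hy hxy),
    fun i j => ?_, fun w => ?_, hone, fun u v r hu hv => ?_⟩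
  · rcases eq_or_ne i j with rfl | hij
    · obtain ⟨x, hx⟩ := hU.nonempty i
      obtain ⟨w, hw⟩ := h.vortexTrace_nonempty (hverts i hx)
      exact ⟨w, Set.mem_biUnion hx hw, w, Set.mem_biUnion hx hw, Or.inl rfl⟩
    · obtain ⟨x, hx, y, hy, hxy⟩ := hU.adj i j hij
      obtain ⟨a, ha, b, hb, hab⟩ := h.exists_touch_vortexTrace (hadj i j x hx y hy hxy)
      exact ⟨a, Set.mem_biUnion hx ha, b, Set.mem_biUnion hy hb, hab⟩
  · cases hw : cuff w with
    | none => exact (hone w hw).trans (Nat.le_add_left 1 k)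
    | some r =>
      obtain ⟨t, rfl⟩ := hsome w r hw
      exact ((ncard_setOf_mem_biUnion_le hU.disjoint _ _).trans
        (h.ncard_setOf_mem_vortexTrace_le t)).trans k.le_succ
  · obtain ⟨x, rfl⟩ := hsome u r hu
    obtain ⟨y, rfl⟩ := hsome v r hv
    exact (hS r).exists_face_eq x y

end VortexSystem

end VortexSystem

lemma EmbScheme.rootBound_mono (κ : ℕ) : Monotone (rootBound κ) := fun m n hmn => by
  have hlink : Monotone (linkBound κ) :=
    monotone_nat_of_le_succ fun n => by rw [linkBound]; lia
  have := hlink hmn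
  unfold rootBound
  lia

/-- A bound for the number of branch sets of a clique model in a graph of Euler genus at most `g`
with at most `p` vortices of width less than `k`. -/
def cliqueMinorBound (g p k : ℕ) : ℕ := k + 1 + (3 + 2 * g) * EmbScheme.rootBound (k + 1) p

theorem AlmostEmbeddable.exists_card_cliqueModel_le {V : Type*} [Finite V] {G : SimpleGraph V}
    {g p a k : ℕ} (h : AlmostEmbeddable G g p a k) :
    ∃ A : Set V, A.ncard ≤ a ∧ ∀ {κ : Type*} [Finite κ] {U : κ → Set V}, IsCliqueModel G U →
      (∀ i, Disjoint (U i) A) → Nat.card κ ≤ cliqueMinorBound g p k := by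
  obtain ⟨A, hA, s, hs, G₀, Gv, hsup, hdisj, S, hg, m, e, hadj, -, hinj, hface, -, hvortex⟩ := h
  choose hinter model hconn hmem hmeet hwidth using hvortex
  have hsys : VortexSystem G₀ Gv e model k :=
    ⟨hdisj, hadj, hinj, hinter, hconn, hmem, hmeet, hwidth⟩
  refine ⟨A, hA, fun {κ} _ {U} hU hUA => ?_⟩
  have notMem {i x} (hx : x ∈ U i) : x ∉ A := Set.disjoint_left.1 (hUA i) hx
  obtain ⟨cuff, hD⟩ := hsys.exists_cuffedBramble hface hU
    (fun j x hx => by rw [hsup]; exact ⟨trivial, notMem hx⟩)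
    (fun i j x hx y hy hxy => by
      rw [hsup, Subgraph.deleteVerts_adj]
      exact ⟨trivial, notMem hx, trivial, notMem hy, hxy⟩)
  refine (hD.card_le hg).trans ?_
  rw [Fintype.card_fin, cliqueMinorBound]
  gcongr
  exact EmbScheme.rootBound_mono _ hs

/-! ### Long induced paths -/

lemma ncard_biUnion_le {α ι : Type*} {t : Set ι} (ht : t.Finite) {s : ι → Set α} {n : ℕ}
    (hs : ∀ i ∈ t, (s i).ncard ≤ n) : (⋃ i ∈ t, s i).ncard ≤ t.ncard * n := by
  have h := ht.toFinset.set_ncard_biUnion_le s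
  simp only [Set.Finite.mem_toFinset] at h
  rw [Set.ncard_eq_toFinset_card t ht]
  exact h.trans (Finset.sum_le_card_nsmul _ _ _ fun i hi => hs i (ht.mem_toFinset.1 hi))

section InducedPath

variable {V : Type*} {G : SimpleGraph V} {U W : Set V} {a b : V} {m : ℕ}

lemma ReachableIn.reachable_induce (h : ReachableIn G U a b) (ha : a ∈ U) (hb : b ∈ U) :
    (G.induce U).Reachable ⟨a, ha⟩ ⟨b, hb⟩ := by
  induction h with
  | refl => rfl
  | tail _ h ih => exact (ih h.2.1).trans (Adj.reachable (G := G.induce U) h.1)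

lemma ReachableIn.exists_adj_of_mem_of_notMem {P : Set V} (h : ReachableIn G U a b) (ha : a ∈ P)
    (hb : b ∉ P) : ∃ x ∈ U, ∃ y ∈ U, G.Adj x y ∧ x ∈ P ∧ y ∉ P := by
  induction h with
  | refl => exact absurd ha hb
  | @tail x y _ h ih =>
    by_cases hx : x ∈ P
    · exact ⟨x, h.2.1, y, h.2.2, h.1, hx, hb⟩
    · exact ih hx

lemma pathGraph_isIndContained_of_le_dist (h : G.Reachable a b) (hm : m ≤ G.dist a b + 1) :
    pathGraph m ⊴ G := by
  obtain ⟨p, hp⟩ := h.exists_walk_length_eq_dist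
  have hreach (i) : G.Reachable a (p.getVert i) := ⟨p.take i⟩
  have hdist {i} (hi : i ≤ p.length) : G.dist a (p.getVert i) = i := by
    refine le_antisymm ((dist_le (p.take i)).trans (by simp)) ?_
    have := (hreach i).dist_triangle_left b
    have := (dist_le (p.drop i)).trans_eq (p.drop_length i)
    lia
  have hle {i j} (hi : i ≤ p.length) (hj : j ≤ p.length) (hij : G.Adj (p.getVert i) (p.getVert j)) :
      j ≤ i + 1 := by
    have := (hreach i).dist_triangle_left (p.getVert j)
    rwa [hdist hi, hdist hj, dist_eq_one_iff_adj.2 hij] at this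
  refine ⟨⟨⟨fun i : Fin m => p.getVert i, fun i j hij => ?_⟩, fun {i j} => ?_⟩⟩
  · have := congrArg (G.dist a) hij
    rw [hdist (by lia), hdist (by lia)] at this
    exact Fin.ext this
  · change G.Adj (p.getVert i) (p.getVert j) ↔ _
    rw [pathGraph_adj]
    constructor
    · intro hij
      have hne : (i : ℕ) ≠ j := fun h => hij.ne (congrArg p.getVert h)
      have := hle (by lia) (by lia) hij
      have := hle (by lia) (by lia) hij.symm
      lia
    · rintro (h | h)
      · exact h ▸ p.adj_getVert_succ (by lia)
      · exact h ▸ (p.adj_getVert_succ (by lia)).symm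

lemma ConnectedOn.pathGraph_isIndContained (hW : ConnectedOn G W) {idx : V → ℕ}
    (hidx : ∀ x ∈ W, ∀ y ∈ W, G.Adj x y → idx y ≤ idx x + 1) (ha : a ∈ W) (hb : b ∈ W)
    (hm : m + idx a ≤ idx b + 1) : pathGraph m ⊴ G := by
  have hreach := (hW a ha b hb).reachable_induce ha hb
  have hwalk {x y : W} (p : (G.induce W).Walk x y) : idx y ≤ idx x + p.length := by
    induction p with
    | nil => simp
    | @cons x y _ h _ ih =>
      have := hidx x x.2 y y.2 h
      rw [Walk.length_cons]
      lia
  obtain ⟨p, hp⟩ := hreach.exists_walk_length_eq_dist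
  have := hwalk p
  simp only at this
  exact (pathGraph_isIndContained_of_le_dist hreach (by lia)).trans ⟨Embedding.induce W⟩

lemma ConnectedOn.exists_reachableIn_ncard_le (hW : ConnectedOn G W) (hG : ¬ pathGraph m ⊴ G)
    (ha : a ∈ W) (hb : b ∈ W) : ∃ Q ⊆ W, Q.ncard ≤ m ∧ ReachableIn G Q a b := by
  have hreach := (hW a ha b hb).reachable_induce ha hb
  obtain ⟨p, hp⟩ := hreach.exists_walk_length_eq_dist
  have hlen : p.length < m := by
    by_contra! h
    exact hG ((pathGraph_isIndContained_of_le_dist hreach (by lia)).trans ⟨Embedding.induce W⟩)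
  have hwalk {x y : W} (p : (G.induce W).Walk x y) :
      ReachableIn G {z | z ∈ p.support.map Subtype.val} x y := by
    induction p with
    | nil => exact .refl _
    | @cons x y z h p ih =>
      exact .trans (.of_adj h (by simp) (by simp)) (ih.mono fun w hw => by
        rw [Walk.support_cons, List.map_cons]
        exact List.mem_cons_of_mem _ hw)
  refine ⟨{z | z ∈ p.support.map Subtype.val}, fun z hz => ?_, ?_, hwalk p⟩
  · obtain ⟨w, -, rfl⟩ := List.mem_map.1 hz
    exact w.2
  · classical
    rw [← List.coe_toFinset, Set.ncard_coe_finset]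
    refine (List.toFinset_card_le _).trans ?_
    rw [List.length_map, Walk.length_support]
    exact hlen

lemma ncard_setOf_walk_length_le [Finite V] {D : ℕ} (hD : ∀ v, (G.neighborSet v).ncard ≤ D) (r : ℕ)
    (a : V) : {x | ∃ p : G.Walk a x, p.length ≤ r}.ncard ≤ (D + 1) ^ r := by
  induction r generalizing a with
  | zero =>
    refine (Set.ncard_le_one_iff (Set.toFinite _)).2 fun ⟨p, hp⟩ ⟨q, hq⟩ => ?_
    exact (p.eq_of_length_eq_zero (by lia)).symm.trans (q.eq_of_length_eq_zero (by lia))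
  | succ r ih =>
    have hsub : {x | ∃ p : G.Walk a x, p.length ≤ r + 1} ⊆
        insert a (⋃ y ∈ G.neighborSet a, {x | ∃ p : G.Walk y x, p.length ≤ r}) := by
      rintro x ⟨p, hp⟩
      cases p with
      | nil => exact Set.mem_insert _ _
      | cons h p => exact .inr (Set.mem_biUnion h ⟨p, Nat.le_of_succ_le_succ hp⟩)
    calc _ ≤ _ := Set.ncard_le_ncard hsub
      _ ≤ _ := Set.ncard_insert_le _ _
      _ ≤ (G.neighborSet a).ncard * (D + 1) ^ r + 1 :=
        Nat.add_le_add_right (ncard_biUnion_le (Set.toFinite _) fun y _ => ih y) 1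
      _ ≤ D * (D + 1) ^ r + (D + 1) ^ r :=
        Nat.add_le_add (Nat.mul_le_mul_right _ (hD a)) (Nat.one_le_pow _ _ D.succ_pos)
      _ = (D + 1) ^ (r + 1) := by ring

lemma ConnectedOn.ncard_le [Finite V] (hW : ConnectedOn G W) {D : ℕ}
    (hD : ∀ v ∈ W, (W ∩ G.neighborSet v).ncard ≤ D) (hG : ¬ pathGraph m ⊴ G) :
    W.ncard ≤ (D + 1) ^ m := by
  rcases W.eq_empty_or_nonempty with rfl | ⟨a, ha⟩
  · simp
  have hball : {x : W | ∃ p : (G.induce W).Walk ⟨a, ha⟩ x, p.length ≤ m} = Set.univ := by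
    refine Set.eq_univ_of_forall fun x => ?_
    have hreach := (hW a ha x x.2).reachable_induce ha x.2
    obtain ⟨p, hp⟩ := hreach.exists_walk_length_eq_dist
    refine ⟨p, ?_⟩
    by_contra! h
    exact hG ((pathGraph_isIndContained_of_le_dist hreach (by lia)).trans ⟨Embedding.induce W⟩)
  have hdeg (v : W) : ((G.induce W).neighborSet v).ncard ≤ D := by
    refine le_trans ?_ (hD v v.2)
    rw [← Set.ncard_image_of_injective _ Subtype.val_injective]
    refine Set.ncard_le_ncard ?_
    rintro _ ⟨w, hw, rfl⟩
    exact ⟨w.2, hw⟩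
  have h := ncard_setOf_walk_length_le hdeg m ⟨a, ha⟩
  rwa [hball, Set.ncard_univ] at h

end InducedPath

section TouchGraph

variable {V J : Type*} {G : SimpleGraph V} {S : J → Set V} {m : ℕ}

/-- The graph on the index set of a family of vertex sets of `G` in which two indices are adjacent
when their sets share a vertex or are joined by an edge. Contracting disjoint connected sets and
taking a torso are both instances of this construction. -/
def touchGraph (G : SimpleGraph V) (S : J → Set V) : SimpleGraph J where
  Adj i j := i ≠ j ∧ ∃ x ∈ S i, ∃ y ∈ S j, x = y ∨ G.Adj x y
  symm := ⟨fun _ _ ⟨hne, x, hx, y, hy, h⟩ =>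
    ⟨hne.symm, y, hy, x, hx, h.imp Eq.symm Adj.symm⟩⟩
  loopless := ⟨fun _ h => h.1 rfl⟩

-- Map a vertex of the union to the first position on the path whose set contains it. This is
-- 1-Lipschitz on the union, and a private vertex of the last set is sent to the end of the path.
lemma pathGraph_isIndContained_of_touchGraph (hS : ∀ j, ConnectedOn G (S j))
    (hpriv : ∀ j, ∃ x ∈ S j, ∀ i, x ∈ S i → i = j) (h : pathGraph m ⊴ touchGraph G S) :
    pathGraph m ⊴ G := by
  obtain ⟨f⟩ := h
  rcases m with _ | m
  · exact .of_isEmpty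
  let W : Set V := ⋃ i ∈ Set.univ, S (f i)
  have hconn : ConnectedOn (pathGraph (m + 1)) Set.univ := fun i _ j _ =>
    reachableIn_univ.2 ((pathGraph_connected m).preconnected i j)
  have hW : ConnectedOn G W := hconn.biUnion (fun i _ => hS (f i)) fun i _ j _ hij =>
    (f.map_adj_iff.2 hij).2
  let pos (x : V) : Set ℕ := {i | ∃ hi : i < m + 1, x ∈ S (f ⟨i, hi⟩)}
  have hpos {x} (hx : x ∈ W) : sInf (pos x) ∈ pos x := by
    obtain ⟨i, -, hi⟩ := Set.mem_iUnion₂.1 hx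
    exact Nat.sInf_mem ⟨i, i.2, hi⟩
  have hstep : ∀ x ∈ W, ∀ y ∈ W, G.Adj x y → sInf (pos y) ≤ sInf (pos x) + 1 := by
    intro x hx y hy hxy
    obtain ⟨hi, hxi⟩ := hpos hx
    obtain ⟨hj, hyj⟩ := hpos hy
    by_cases hij : sInf (pos x) = sInf (pos y)
    · lia
    · have hadj : (touchGraph G S).Adj (f ⟨_, hi⟩) (f ⟨_, hj⟩) :=
        ⟨fun h => hij (Fin.mk.inj (f.injective h)), x, hxi, y, hyj, .inr hxy⟩
      rw [f.map_adj_iff, pathGraph_adj] at hadj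
      simp only at hadj
      lia
  obtain ⟨a, ha, -⟩ := hpriv (f 0)
  obtain ⟨b, hb, hb'⟩ := hpriv (f (Fin.last m))
  have hbW : b ∈ W := Set.mem_biUnion (Set.mem_univ _) hb
  have ha0 : sInf (pos a) = 0 := Nat.sInf_eq_zero.2 (.inl ⟨m.succ_pos, ha⟩)
  have hbm : sInf (pos b) = m := congrArg Fin.val (f.injective (hb' _ (hpos hbW).2))
  exact hW.pathGraph_isIndContained hstep (Set.mem_biUnion (Set.mem_univ _) ha) hbW (by lia)

end TouchGraph

/-! ### Clique minors along a path -/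

section PathList

variable {V J : Type*} {G : SimpleGraph V} {l l' : List V}

/-- `l` lists the vertices of a path of `G` in order. The empty list is allowed. -/
structure IsPathList (G : SimpleGraph V) (l : List V) : Prop where
  nodup : l.Nodup
  isChain : l.IsChain G.Adj

lemma IsPathList.infix (h : IsPathList G l) (hl : l' <:+: l) : IsPathList G l' :=
  ⟨h.nodup.sublist hl.sublist, h.isChain.infix hl⟩

lemma connectedOn_singleton (G : SimpleGraph V) (v : V) : ConnectedOn G {v} := by
  rintro _ rfl _ rfl
  exact .refl _

lemma connectedOn_of_isChain (h : l.IsChain G.Adj) : ConnectedOn G {x | x ∈ l} := by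
  suffices hhead : ∀ x ∈ l, ∀ h ∈ l.head?, ReachableIn G {x | x ∈ l} h x by
    intro a ha b hb
    have hh := List.head?_eq_some_head (List.ne_nil_of_mem ha)
    exact (hhead a ha _ hh).symm.trans (hhead b hb _ hh)
  induction l with
  | nil => simp
  | cons y l ih =>
    rintro x hx _ ⟨⟩
    rcases List.mem_cons.1 hx with rfl | hxl
    · exact .refl _
    · have hh := List.head?_eq_some_head (List.ne_nil_of_mem hxl)
      have hmem := List.mem_of_mem_head? hh
      exact .trans (.of_adj (h.rel_head? hh) List.mem_cons_self (List.mem_cons_of_mem _ hmem))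
        ((ih h.tail x hxl _ hh).mono fun z hz => List.mem_cons_of_mem _ hz)

lemma exists_eq_append_cons {Y : Set V} (h : ∃ x ∈ l, x ∈ Y) :
    ∃ l₁ v l₂, l = l₁ ++ v :: l₂ ∧ v ∈ Y ∧ ∀ x ∈ l₁, x ∉ Y := by
  classical
  obtain ⟨v, hv⟩ : ∃ v, l.find? (· ∈ Y) = some v := by
    rw [← Option.isSome_iff_exists, List.find?_isSome]
    simpa using h
  obtain ⟨hvY, l₁, l₂, hl, hl₁⟩ := List.find?_eq_some_iff_append.1 hv
  exact ⟨l₁, v, l₂, hl, of_decide_eq_true hvY, by simpa using hl₁⟩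

lemma lt_of_forall_infix_lt {μ : Set V → ℕ} (hsingle : ∀ v, μ {v} ≤ 1)
    (hunion : ∀ A B, μ (A ∪ B) ≤ μ A + μ B) {B y : ℕ} {Y : Set V} (hfin : Y.Finite)
    (hY : Y.ncard ≤ y) (hl : l.Nodup)
    (h : ∀ l', l' <:+: l → (∀ x ∈ l', x ∉ Y) → μ {x | x ∈ l'} < B) :
    μ {x | x ∈ l} < (y + 1) * B := by
  induction y generalizing Y l with
  | zero =>
    obtain rfl := (Set.ncard_eq_zero hfin).1 (Nat.le_zero.1 hY)
    simpa using h l List.infix_rfl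
  | succ y ih =>
    by_cases hlY : ∀ x ∈ l, x ∉ Y
    · exact (h l List.infix_rfl hlY).trans_le (Nat.le_mul_of_pos_left _ (Nat.succ_pos _))
    push Not at hlY
    obtain ⟨l₁, v, l₂, rfl, hvY, hl₁⟩ := exists_eq_append_cons hlY
    have hnd₂ := List.nodup_cons.1 hl.of_append_right
    have hle : μ {x | x ∈ l₁ ++ v :: l₂} ≤ μ {x | x ∈ l₁} + (1 + μ {x | x ∈ l₂}) := by
      have hset : {x | x ∈ l₁ ++ v :: l₂} = {x | x ∈ l₁} ∪ ({v} ∪ {x | x ∈ l₂}) := by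
        ext x
        simp [or_left_comm]
      rw [hset]
      exact (hunion _ _).trans (Nat.add_le_add_left
        ((hunion _ _).trans (Nat.add_le_add_right (hsingle v) _)) _)
    have h₁ : μ {x | x ∈ l₁} < B := h l₁ ⟨[], v :: l₂, rfl⟩ hl₁
    have h₂ : μ {x | x ∈ l₂} < (y + 1) * B := by
      refine ih (hfin.subset Set.sdiff_subset) (Y := Y \ {v}) ?_ hnd₂.2 fun l' hl' hdis => ?_
      · rw [Set.ncard_sdiff_singleton_of_mem hvY]
        lia
      · refine h l' (hl'.trans ⟨l₁ ++ [v], [], by simp⟩) fun x hx hxY => hdis x hx ⟨hxY, ?_⟩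
        rintro rfl
        exact hnd₂.1 (hl'.subset hx)
    rw [Nat.succ_mul]
    lia

lemma exists_segments (P : Set V) (l : List V) : ∃ L : List (List V), L.flatten <+: l ∧
    ({x | x ∈ l} ∩ P).ncard ≤ L.length ∧ ∀ s ∈ L, ∃ x ∈ s, x ∈ P := by
  induction l with
  | nil => exact ⟨[], by simp⟩
  | cons x l ih =>
    obtain ⟨L, hL, hlen, hLP⟩ := ih
    by_cases hx : x ∈ P
    · refine ⟨[x] :: L, (List.prefix_cons_inj x).2 hL, ?_, ?_⟩
      · have hset : {y | y ∈ x :: l} ∩ P = insert x ({y | y ∈ l} ∩ P) := by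
          ext y
          by_cases hy : y = x <;> simp [hy, hx]
        rw [hset]
        exact (Set.ncard_insert_le _ _).trans (Nat.succ_le_succ hlen)
      · simpa [hx] using hLP
    have hset : {y | y ∈ x :: l} ∩ P = {y | y ∈ l} ∩ P := by
      ext y
      by_cases hy : y = x <;> simp [hy, hx]
    rw [hset]
    rcases L with _ | ⟨s, L⟩
    · exact ⟨[], List.nil_prefix, hlen, hLP⟩
    · refine ⟨(x :: s) :: L, (List.prefix_cons_inj x).2 hL, hlen, ?_⟩
      rw [List.forall_mem_cons] at hLP ⊢
      exact ⟨hLP.1.imp fun y hy => ⟨List.mem_cons_of_mem _ hy.1, hy.2⟩, hLP.2⟩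

lemma IsPathList.exists_infix_neighborSet [Finite V] {m B : ℕ} (hl : IsPathList G l)
    (hG : ¬ pathGraph m ⊴ G) (hB : 0 < B) (hlen : (2 * B) ^ m ≤ l.length) :
    ∃ v ∈ l, ∃ l', l' <:+: l ∧ v ∉ l' ∧ B ≤ ({x | x ∈ l'} ∩ G.neighborSet v).ncard := by
  classical
  have hm : m ≠ 0 := by
    rintro rfl
    exact hG .of_isEmpty
  have hcard : {x | x ∈ l}.ncard = l.length := by
    rw [← List.coe_toFinset, Set.ncard_coe_finset, List.toFinset_card_of_nodup hl.nodup]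
  obtain ⟨v, hv, hdeg⟩ : ∃ v ∈ l, 2 * B - 2 < ({x | x ∈ l} ∩ G.neighborSet v).ncard := by
    by_contra! hcon
    have h := (connectedOn_of_isChain hl.isChain).ncard_le hcon hG
    have : (2 * B - 2 + 1) ^ m < (2 * B) ^ m := Nat.pow_lt_pow_left (by lia) hm
    lia
  obtain ⟨l₁, l₂, rfl⟩ := List.append_of_mem hv
  have hnd := List.nodup_middle.1 hl.nodup
  have hvl : v ∉ l₁ ++ l₂ := (List.nodup_cons.1 hnd).1
  have hle : ({x | x ∈ l₁ ++ v :: l₂} ∩ G.neighborSet v).ncard ≤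
      ({x | x ∈ l₁} ∩ G.neighborSet v).ncard + ({x | x ∈ l₂} ∩ G.neighborSet v).ncard := by
    refine (Set.ncard_le_ncard ?_).trans (Set.ncard_union_le _ _)
    rintro x ⟨hx, hvx⟩
    have hxv : x ≠ v := hvx.ne'
    rcases List.mem_append.1 hx with hx | hx
    · exact .inl ⟨hx, hvx⟩
    · exact .inr ⟨List.mem_of_ne_of_mem hxv hx, hvx⟩
  rcases le_or_gt B ({x | x ∈ l₁} ∩ G.neighborSet v).ncard with h₁ | h₁
  · exact ⟨v, hv, l₁, ⟨[], v :: l₂, rfl⟩, fun h => hvl (List.mem_append_left _ h), h₁⟩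
  · exact ⟨v, hv, l₂, ⟨l₁ ++ [v], [], by simp⟩, fun h => hvl (List.mem_append_right _ h), by lia⟩

lemma IsPathList.pairwise_disjoint {L : List (List V)} (h : IsPathList G L.flatten) :
    Pairwise (Function.onFun Disjoint fun s : {s // s ∈ L} => {x | x ∈ s.1}) := by
  have : Std.Symm (List.Disjoint (α := V)) := ⟨fun _ _ h => h.symm⟩
  exact fun s t hst => Set.disjoint_left.2 fun x hs ht =>
    (List.nodup_flatten.1 h.nodup).2.forall s.2 t.2 (fun h => hst (Subtype.ext h)) hs ht

lemma IsPathList.attach_flatten {L : List (List V)} (hne : [] ∉ L) (h : IsPathList G L.flatten) :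
    IsPathList (touchGraph G fun s : {s // s ∈ L} => {x | x ∈ s.1}) L.attach := by
  have hnd : L.Nodup := by
    refine (List.nodup_flatten.1 h.nodup).2.imp_of_mem fun {s t} hs _ hd => ?_
    rintro rfl
    obtain ⟨x, hx⟩ := List.exists_mem_of_ne_nil s fun h => hne (h ▸ hs)
    exact hd hx hx
  refine ⟨List.nodup_attach.2 hnd, List.isChain_iff_getElem.2 fun i hi => ?_⟩
  have hch := List.isChain_iff_getElem.1 ((List.isChain_flatten hne).1 h.isChain).2 i
    (by simpa using hi)
  simp only [List.length_attach] at hi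
  have h₁ : L[i] ≠ [] := fun h => hne (h ▸ List.getElem_mem _)
  have h₂ : L[i + 1] ≠ [] := fun h => hne (h ▸ List.getElem_mem _)
  refine ⟨fun h => ?_, L[i].getLast h₁, by simp, L[i + 1].head h₂, by simp, .inr ?_⟩
  · have := (List.nodup_attach.2 hnd).getElem_inj_iff.1 h
    lia
  · exact hch _ (List.getLast?_eq_getLast_of_ne_nil h₁) _ (List.head?_eq_some_head h₂)

lemma IsCliqueModel.biUnion_touchGraph {ι : Type*} {S : J → Set V} {U : ι → Set J}
    (hU : IsCliqueModel (touchGraph G S) U) (hne : ∀ j, (S j).Nonempty)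
    (hS : ∀ j, ConnectedOn G (S j)) (hd : Pairwise (Function.onFun Disjoint S)) :
    IsCliqueModel G fun i => ⋃ j ∈ U i, S j where
  nonempty i :=
    let ⟨j, hj⟩ := hU.nonempty i
    (hne j).mono (Set.subset_biUnion_of_mem (u := S) hj)
  connectedOn i := (hU.connectedOn i).biUnion (fun j _ => hS j) fun _ _ _ _ h => h.2
  disjoint i i' hii' := by
    simp only [Function.onFun, Set.disjoint_iUnion₂_left, Set.disjoint_iUnion₂_right]
    exact fun j' hj' j hj => hd (Set.disjoint_iff_forall_ne.1 (hU.disjoint hii') hj hj')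
  adj i i' hii' := by
    obtain ⟨j, hj, j', hj', hne, x, hx, y, hy, hxy⟩ := hU.adj i i' hii'
    refine ⟨x, Set.mem_biUnion hj hx, y, Set.mem_biUnion hj' hy, hxy.resolve_left ?_⟩
    rintro rfl
    exact Set.disjoint_left.1 (hd hne) hx hy

lemma IsCliqueModel.cons {n : ℕ} {U : Fin n → Set V} (hU : IsCliqueModel G U) {v : V}
    (hv : ∀ i, v ∉ U i) (hadj : ∀ i, ∃ x ∈ U i, G.Adj v x) :
    IsCliqueModel G (Fin.cons {v} U : Fin (n + 1) → Set V) where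
  nonempty := Fin.cases (Set.singleton_nonempty v) hU.nonempty
  connectedOn := Fin.cases (connectedOn_singleton G v) hU.connectedOn
  disjoint i j hij := by
    cases i using Fin.cases with
    | zero =>
      cases j using Fin.cases with
      | zero => exact absurd rfl hij
      | succ j => exact Set.disjoint_singleton_left.2 (hv j)
    | succ i =>
      cases j using Fin.cases with
      | zero => exact Set.disjoint_singleton_right.2 (hv i)
      | succ j => exact hU.disjoint fun h => hij (congrArg Fin.succ h)
  adj i j hij := by
    cases i using Fin.cases with
    | zero =>
      cases j using Fin.cases with
      | zero => exact absurd rfl hij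
      | succ j => exact ⟨v, rfl, hadj j⟩
    | succ i =>
      cases j using Fin.cases with
      | zero =>
        obtain ⟨x, hx, h⟩ := hadj i
        exact ⟨x, hx, v, rfl, h.symm⟩
      | succ j => exact hU.adj i j fun h => hij (congrArg Fin.succ h)

-- Some vertex `v` has many neighbours on one side of itself along the path. Cut that side into
-- segments each containing a neighbour of `v`, contract them, and recurse on the resulting path.
theorem IsPathList.exists_isCliqueModel [Finite V] {m a : ℕ} (hl : IsPathList G l)
    (hG : ¬ pathGraph m ⊴ G) (hlen : 2 ^ (2 * m) ^ a ≤ l.length) :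
    ∃ U : Fin a → Set V, IsCliqueModel G U ∧ ∀ i, U i ⊆ {x | x ∈ l} := by
  induction a generalizing V with
  | zero => exact ⟨nofun, ⟨nofun, nofun, nofun, nofun⟩, nofun⟩
  | succ a ih =>
    have hpow : (2 * 2 ^ (2 * m) ^ a) ^ m ≤ 2 ^ (2 * m) ^ (a + 1) := by
      rw [← pow_succ', ← pow_mul]
      refine Nat.pow_le_pow_right two_pos ?_
      rcases m.eq_zero_or_pos with rfl | hm
      · simp
      · have : 1 ≤ (2 * m) ^ a := Nat.one_le_pow _ _ (by lia)
        rw [pow_succ]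
        nlinarith
    obtain ⟨v, hv, l', hl', hvl', hcount⟩ :=
      hl.exists_infix_neighborSet hG (by positivity) (hpow.trans hlen)
    obtain ⟨L, hL, hLlen, hLv⟩ := exists_segments (G.neighborSet v) l'
    have hflat := hl.infix (hL.isInfix.trans hl')
    have hne : [] ∉ L := fun h => List.not_mem_nil (hLv _ h).choose_spec.1
    let S (s : {s // s ∈ L}) : Set V := {x | x ∈ s.1}
    have hSv (s) : ∃ x ∈ S s, G.Adj v x := hLv s.1 s.2
    have hS (s) : ConnectedOn G (S s) :=
      connectedOn_of_isChain (((List.isChain_flatten hne).1 hflat.isChain).1 s.1 s.2)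
    have hd : Pairwise (Function.onFun Disjoint S) := hflat.pairwise_disjoint
    have hcontract : ¬ pathGraph m ⊴ touchGraph G S := fun h =>
      hG (pathGraph_isIndContained_of_touchGraph hS (fun s => (hSv s).imp fun x hx =>
        ⟨hx.1, fun t hxt => by_contra fun hst => Set.disjoint_left.1 (hd hst) hxt hx.1⟩) h)
    have : Finite {s // s ∈ L} := L.finite_toSet
    obtain ⟨U, hU, -⟩ := ih (hflat.attach_flatten hne) hcontract
      ((hcount.trans hLlen).trans_eq List.length_attach.symm)
    have hsub (i) : ⋃ s ∈ U i, S s ⊆ {x | x ∈ l'} := Set.iUnion₂_subset fun s _ x hx =>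
      hL.subset (List.mem_flatten_of_mem s.2 hx)
    refine ⟨Fin.cons {v} fun i => ⋃ s ∈ U i, S s, (hU.biUnion_touchGraph
      (fun s => (hSv s).imp fun _ h => h.1) hS hd).cons (fun i h => hvl' (hsub i h)) fun i => ?_,
      Fin.cases (Set.singleton_subset_iff.2 hv) fun i => (hsub i).trans hl'.subset⟩
    obtain ⟨s, hs⟩ := hU.nonempty i
    exact (hSv s).imp fun x hx => ⟨Set.mem_biUnion hs hx.1, hx.2⟩

end PathList

/-! ### Shadows and torsos -/

section Shadow

variable {V : Type*} {G : SimpleGraph V} {X : Set V} {x u : V}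

/-- The shadow of a vertex `u` of `X`: the vertex `u` and all components of `G - X` adjacent to
it. Shadows are connected, and their touch graph is the torso of `X` in `G`, in which the
neighbourhood in `X` of every component of `G - X` is a clique. -/
def shadow (G : SimpleGraph V) (X : Set V) (u : V) : Set V :=
  {x | x = u ∨ ∃ p ∉ X, G.Adj u p ∧ ReachableIn G Xᶜ p x}

lemma self_mem_shadow (G : SimpleGraph V) (X : Set V) (u : V) : u ∈ shadow G X u := .inl rfl

lemma eq_of_mem_shadow (h : x ∈ shadow G X u) (hx : x ∈ X) : x = u := by
  rcases h with h | ⟨p, hp, _, hpx⟩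
  · exact h
  · exact absurd hx (hpx.right_mem hp)

lemma mem_shadow_of_adj {y : V} (h : y ∈ shadow G X u) (hx : x ∉ X) (hxy : G.Adj x y) :
    x ∈ shadow G X u := by
  rcases h with rfl | ⟨p, hp, hup, hpy⟩
  · exact .inr ⟨x, hx, hxy.symm, .refl x⟩
  · exact .inr ⟨p, hp, hup, hpy.trans (.of_adj hxy.symm (hpy.right_mem hp) hx)⟩

lemma connectedOn_shadow (G : SimpleGraph V) (X : Set V) (u : V) :
    ConnectedOn G (shadow G X u) := by
  suffices hu : ∀ x ∈ shadow G X u, ReachableIn G (shadow G X u) u x from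
    fun a ha b hb => (hu a ha).symm.trans (hu b hb)
  rintro x (rfl | ⟨p, hp, hup, hpx⟩)
  · exact .refl x
  · have hmem {y} (hy : ReachableIn G Xᶜ p y) : y ∈ shadow G X u := .inr ⟨p, hp, hup, hy⟩
    refine .trans (.of_adj hup (self_mem_shadow G X u) (hmem (.refl p))) ?_
    induction hpx with
    | refl => exact .refl p
    | tail hpy hyz ih => exact ih.trans (.of_adj hyz.1 (hmem hpy) (hmem (hpy.tail hyz)))

lemma adj_or_exists_reachableIn_of_touchGraph_shadow {u v : X}
    (h : (touchGraph G fun u : X => shadow G X u).Adj u v) :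
    G.Adj u v ∨ ∃ p q, p ∉ X ∧ G.Adj u p ∧ G.Adj v q ∧ ReachableIn G Xᶜ p q := by
  obtain ⟨hne, x, hx, y, hy, hxy⟩ := h
  rcases hx with rfl | ⟨p, hp, hup, hpx⟩
  · rcases hxy with rfl | hxy
    · exact absurd (Subtype.ext (eq_of_mem_shadow hy u.2)) hne
    rcases hy with rfl | ⟨q, hq, hvq, hqy⟩
    · exact .inl hxy
    · exact .inr ⟨y, q, hqy.right_mem hq, hxy, hvq, hqy.symm⟩
  rcases hy with rfl | ⟨q, hq, hvq, hqy⟩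
  · rcases hxy with rfl | hxy
    · exact absurd v.2 (hpx.right_mem hp)
    · exact .inr ⟨p, x, hp, hup, hxy.symm, hpx⟩
  · refine .inr ⟨p, q, hp, hup, hvq, hpx.trans (.trans ?_ hqy.symm)⟩
    rcases hxy with rfl | hxy
    · exact .refl x
    · exact .of_adj hxy (hpx.right_mem hp) (hqy.right_mem hq)

lemma pathGraph_isIndContained_of_touchGraph_shadow {m : ℕ}
    (h : pathGraph m ⊴ touchGraph G fun u : X => shadow G X u) : pathGraph m ⊴ G :=
  pathGraph_isIndContained_of_touchGraph (fun u : X => connectedOn_shadow G X u)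
    (fun u => ⟨u, self_mem_shadow G X u,
      fun _ h => Subtype.ext (eq_of_mem_shadow h u.2).symm⟩) h

lemma IsPathList.exists_isPathList_shadow {l : List V} (hl : IsPathList G l) (X : Set V) :
    ∃ l' : List X, IsPathList (touchGraph G fun u : X => shadow G X u) l' ∧
      ∀ x : X, x ∈ l' ↔ ↑x ∈ l := by
  suffices h : ∃ l' : List X, IsPathList (touchGraph G fun u : X => shadow G X u) l' ∧
      (∀ x : X, x ∈ l' ↔ ↑x ∈ l) ∧ ∀ a ∈ l.head?, ∀ y ∈ l'.head?, a ∈ shadow G X y from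
    h.imp fun l' h => ⟨h.1, h.2.1⟩
  induction l with
  | nil => exact ⟨[], ⟨.nil, .nil⟩, by simp⟩
  | cons a l ih =>
    obtain ⟨hal, hnd⟩ := List.nodup_cons.1 hl.nodup
    obtain ⟨l', hl', hmem, hhead⟩ := ih ⟨hnd, hl.isChain.tail⟩
    have exists_adj_mem_shadow {y} (hy : y ∈ l'.head?) : ∃ b, G.Adj a b ∧ b ∈ shadow G X y := by
      have hyl := (hmem y).1 (List.mem_of_mem_head? hy)
      have hb := List.head?_eq_some_head (List.ne_nil_of_mem hyl)
      exact ⟨_, hl.isChain.rel_head? hb, hhead _ hb y hy⟩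
    by_cases ha : a ∈ X
    · refine ⟨⟨a, ha⟩ :: l', ⟨List.nodup_cons.2 ⟨fun h => hal ((hmem _).1 h), hl'.nodup⟩,
        List.isChain_cons.2 ⟨fun y hy => ?_, hl'.isChain⟩⟩, fun x => ?_, ?_⟩
      · obtain ⟨b, hab, hb⟩ := exists_adj_mem_shadow hy
        refine ⟨?_, a, self_mem_shadow G X a, b, hb, .inr hab⟩
        rintro rfl
        exact hal ((hmem _).1 (List.mem_of_mem_head? hy))
      · rw [List.mem_cons, List.mem_cons, hmem, Subtype.ext_iff]
      · rintro _ ⟨⟩ _ ⟨⟩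
        exact self_mem_shadow G X a
    · refine ⟨l', hl', fun x => ?_, ?_⟩
      · rw [hmem, List.mem_cons, or_iff_right]
        rintro rfl
        exact ha x.2
      · rintro _ ⟨⟩ y hy
        obtain ⟨b, hab, hb⟩ := exists_adj_mem_shadow hy
        exact mem_shadow_of_adj hb ha hab

end Shadow

/-! ### Branches of a tree -/

section Branch

variable {N : Type*} {T : SimpleGraph N} {t t' t'' x y : N}

/-- The component of `T - t` containing `t'`. -/
def branch (T : SimpleGraph N) (t t' : N) : Set N := {x | ReachableIn T {t}ᶜ t' x}

lemma self_mem_branch (T : SimpleGraph N) (t t' : N) : t' ∈ branch T t t' := .refl t'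

lemma notMem_branch (h : T.Adj t t') : t ∉ branch T t t' := fun ht =>
  (ReachableIn.right_mem ht h.ne') rfl

lemma mem_branch_of_adj (h : T.Adj t t') (hx : x ∈ branch T t t') (hxy : T.Adj x y)
    (hy : y ≠ t) : y ∈ branch T t t' :=
  ReachableIn.trans hx (.of_adj hxy (ne_of_mem_of_not_mem hx (notMem_branch h)) hy)

lemma eq_of_adj_of_mem_branch (hT : T.IsAcyclic) (h : T.Adj t t') (hx : x ∈ branch T t t')
    (hxt : T.Adj x t) : x = t' := by
  by_contra hne
  refine isBridge_iff.1 (isAcyclic_iff_forall_adj_isBridge.1 hT hxt.symm) (.trans (v := t') ?_ ?_)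
  · refine Adj.reachable ?_
    rw [deleteEdges_adj]
    simp [h, Ne.symm hne, h.ne']
  · refine (reachable_iff_reflTransGen _ _).2 (Relation.ReflTransGen.mono ?_ _ _ hx)
    rintro a b ⟨hab, ha, hb⟩
    have ha : a ≠ t := ha
    have hb : b ≠ t := hb
    rw [deleteEdges_adj]
    simp [hab, ha, hb]

lemma eq_and_eq_of_adj_branch (hT : T.IsAcyclic) (h : T.Adj t t') (hx : x ∈ branch T t t')
    (hy : y ∉ branch T t t') (hxy : T.Adj x y) : x = t' ∧ y = t := by
  obtain rfl : y = t := by_contra fun hyt => hy (mem_branch_of_adj h hx hxy hyt)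
  exact ⟨eq_of_adj_of_mem_branch hT h hx hxy, rfl⟩

lemma exists_mem_branch (hT : T.Connected) (hx : x ≠ t) : ∃ t', T.Adj t t' ∧ x ∈ branch T t t' := by
  by_contra hcon
  obtain ⟨y, -, z, -, hyz, ⟨hyt, hy⟩, hz⟩ :=
    (reachableIn_univ.2 (hT.preconnected x t)).exists_adj_of_mem_of_notMem
      (P := {x | x ≠ t ∧ ¬ ∃ t', T.Adj t t' ∧ x ∈ branch T t t'}) ⟨hx, hcon⟩ fun h => h.1 rfl
  by_cases hzt : z = t
  · exact hy ⟨y, (hzt ▸ hyz).symm, self_mem_branch T t y⟩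
  · obtain ⟨t', htt', hzt'⟩ := not_not.1 fun h => hz ⟨hzt, h⟩
    exact hy ⟨t', htt', mem_branch_of_adj htt' hzt' hyz.symm hyt⟩

lemma branch_subset_branch (hT : T.IsAcyclic) (h : T.Adj t t') (h' : T.Adj t' t'')
    (hne : t'' ≠ t) : branch T t' t'' ⊆ branch T t t' := by
  intro x hx
  by_contra hxt
  obtain ⟨y, hy, z, -, hyz, hyt, hzt⟩ := ReachableIn.exists_adj_of_mem_of_notMem hx
    (mem_branch_of_adj h (self_mem_branch T t t') h' hne) hxt
  exact hy (eq_and_eq_of_adj_branch hT h hyt hzt hyz).1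

lemma disjoint_branch (hT : T.IsAcyclic) (h : T.Adj t t') :
    Disjoint (branch T t t') (branch T t' t) := by
  refine Set.disjoint_left.2 fun x hx hx' => ?_
  obtain ⟨y, hy, z, -, hyz, hyt, hzt⟩ := (ReachableIn.symm hx').exists_adj_of_mem_of_notMem
    hx (notMem_branch h)
  exact hy (eq_and_eq_of_adj_branch hT h hyt hzt hyz).1

end Branch

/-! ### Tree representations -/

lemma connectedOn_of_connected_induce {V : Type*} {G : SimpleGraph V} {U : Set V}
    (h : (G.induce U).Connected) : ConnectedOn G U := fun a ha b hb =>
  ((reachable_iff_reflTransGen _ _).1 (h.preconnected ⟨a, ha⟩ ⟨b, hb⟩)).lift Subtype.val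
    fun u v huv => ⟨huv, u.2, v.2⟩

namespace TreeRep

variable {V N : Type*} {G : SimpleGraph V} {T : SimpleGraph N} {t t' : N} {v w : V}

lemma connectedOn_model (R : TreeRep G T) (v : V) : ConnectedOn T (R.model v) :=
  connectedOn_of_connected_induce (R.model_connected v)

lemma model_nonempty (R : TreeRep G T) (v : V) : (R.model v).Nonempty :=
  Set.nonempty_coe_sort.1 (R.model_connected v).nonempty

/-- The vertices of `G` strictly behind the edge `tt'` of `T` as seen from `t`: those whose model
lies in the component of `T - t` containing `t'`. -/
def behind (R : TreeRep G T) (t t' : N) : Set V := {v | R.model v ⊆ branch T t t'}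

lemma mem_behind_of_mem_branch (R : TreeRep G T) (hv : v ∉ R.bag t) {x : N} (hx : x ∈ R.model v)
    (hxt : x ∈ branch T t t') : v ∈ R.behind t t' := fun y hy =>
  ReachableIn.trans hxt ((R.connectedOn_model v x hx y hy).mono
    fun _ hz hzt => hv (show t ∈ R.model v from hzt ▸ hz))

lemma mem_bag_inter_bag_of_adj_behind (hT : T.IsAcyclic) (R : TreeRep G T) (h : T.Adj t t')
    (hv : v ∈ R.behind t t') (hw : w ∉ R.behind t t') (hvw : G.Adj v w) :
    w ∈ R.bag t ∩ R.bag t' := by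
  obtain ⟨x, hxv, hxw⟩ := R.adj_meet hvw
  obtain ⟨y, hyw, hyt⟩ := Set.not_subset.1 hw
  obtain ⟨x', hx', y', hy', hxy', hxt', hyt'⟩ :=
    (R.connectedOn_model w x hxw y hyw).exists_adj_of_mem_of_notMem (hv hxv) hyt
  obtain ⟨rfl, rfl⟩ := eq_and_eq_of_adj_branch hT h hxt' hyt' hxy'
  exact ⟨hy', hx'⟩

lemma exists_forall_reachableIn_mem_behind (hT : T.IsTree) (R : TreeRep G T) (hv : v ∉ R.bag t) :
    ∃ t', T.Adj t t' ∧ ∀ w, ReachableIn G (R.bag t)ᶜ v w → w ∈ R.behind t t' := by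
  obtain ⟨x, hx⟩ := R.model_nonempty v
  obtain ⟨t', htt', hxt⟩ := exists_mem_branch hT.connected
    (show x ≠ t by rintro rfl; exact hv hx)
  refine ⟨t', htt', fun w hw => ?_⟩
  induction hw with
  | refl => exact R.mem_behind_of_mem_branch hv hx hxt
  | tail _ hab ih =>
    by_contra hb
    exact hab.2.2 (R.mem_bag_inter_bag_of_adj_behind hT.isAcyclic htt' ih hb hab.1).1

lemma notMem_behind (R : TreeRep G T) (h : T.Adj t t') (hv : v ∈ R.bag t) :
    v ∉ R.behind t t' := fun hvt => notMem_branch h (hvt hv)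

lemma behind_subset_behind (hT : T.IsAcyclic) (R : TreeRep G T) {t'' : N} (h : T.Adj t t')
    (h' : T.Adj t' t'') (hne : t'' ≠ t) : R.behind t' t'' ⊆ R.behind t t' :=
  fun _ hv => hv.trans (branch_subset_branch hT h h' hne)

lemma disjoint_behind (hT : T.IsAcyclic) (R : TreeRep G T) (h : T.Adj t t') :
    Disjoint (R.behind t t') (R.behind t' t) :=
  Set.disjoint_left.2 fun v hv hv' =>
    let ⟨_, hx⟩ := R.model_nonempty v
    (disjoint_branch hT h).notMem_of_mem_left (hv hx) (hv' hx)

lemma touchGraph_shadow_bag_le_torso (hT : T.IsTree) (R : TreeRep G T) (t : N) :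
    (touchGraph G fun u : R.bag t => shadow G (R.bag t) u) ≤ R.torso t := by
  intro u v huv
  refine (fromRel_adj _ _ _).2 ⟨huv.ne, .inl ?_⟩
  refine (adj_or_exists_reachableIn_of_touchGraph_shadow huv).imp_right ?_
  rintro ⟨p, q, hp, hup, hvq, hpq⟩
  obtain ⟨t', htt', ht'⟩ := R.exists_forall_reachableIn_mem_behind hT hp
  have mem_bag {x y} (hx : x ∈ R.bag t) (hxy : G.Adj x y) (hy : ReachableIn G (R.bag t)ᶜ p y) :
      x ∈ R.bag t' :=
    (R.mem_bag_inter_bag_of_adj_behind hT.isAcyclic htt' (ht' y hy) (R.notMem_behind htt' hx)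
      hxy.symm).2
  exact ⟨t', htt', mem_bag u.2 hup (.refl p), mem_bag v.2 hvq hpq⟩

lemma isClique_torso (R : TreeRep G T) (h : T.Adj t t') :
    (R.torso t).IsClique {u | ↑u ∈ R.bag t'} := fun _ hu _ hv hne =>
  (fromRel_adj _ _ _).2 ⟨hne, .inl (.inr ⟨t', h, hu, hv⟩)⟩

end TreeRep

/-! ### Base graphs -/

section Base

variable {V : Type*} {G H : SimpleGraph V} {Q : Set V} {l : List V}

lemma ReachableIn.mono_graph {U : Set V} {a b : V} (h : G ≤ H) (hab : ReachableIn G U a b) :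
    ReachableIn H U a b :=
  Relation.ReflTransGen.mono (fun _ _ huv => ⟨h huv.1, huv.2⟩) _ _ hab

lemma IsCliqueModel.mono_graph {ι : Type*} {U : ι → Set V} (h : G ≤ H) (hU : IsCliqueModel G U) :
    IsCliqueModel H U where
  nonempty := hU.nonempty
  connectedOn i a ha b hb := (hU.connectedOn i a ha b hb).mono_graph h
  disjoint := hU.disjoint
  adj i j hij :=
    let ⟨a, ha, b, hb, hab⟩ := hU.adj i j hij
    ⟨a, ha, b, hb, h hab⟩

lemma isCliqueModel_singleton (hQ : G.IsClique Q) : IsCliqueModel G fun v : Q => {(v : V)} where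
  nonempty _ := Set.singleton_nonempty _
  connectedOn v := connectedOn_singleton G v
  disjoint _ _ huv := Set.disjoint_singleton.2 fun h => huv (Subtype.ext h)
  adj u v huv := ⟨u, rfl, v, rfl, hQ u.2 v.2 fun h => huv (Subtype.ext h)⟩

lemma IsPathList.ncard_setOf_mem (hl : IsPathList G l) : {x | x ∈ l}.ncard = l.length := by
  classical
  rw [← List.coe_toFinset, Set.ncard_coe_finset, List.toFinset_card_of_nodup hl.nodup]

variable [Finite V] {g p a k Δ m : ℕ}

lemma AlmostEmbeddable.ncard_le_of_isClique (h : AlmostEmbeddable G g p a k) (hQ : G.IsClique Q) :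
    Q.ncard ≤ cliqueMinorBound g p k + a := by
  obtain ⟨A, hA, hmodel⟩ := h.exists_card_cliqueModel_le
  have hQA : (Q \ A).ncard ≤ cliqueMinorBound g p k :=
    hmodel (isCliqueModel_singleton (hQ.subset Set.sdiff_subset))
      fun v => Set.disjoint_singleton_left.2 v.2.2
  exact (Set.ncard_le_ncard_sdiff_add_ncard Q A).trans (add_le_add hQA hA)

lemma AlmostBoundedDegree.ncard_le_of_isClique (h : AlmostBoundedDegree G k Δ)
    (hQ : G.IsClique Q) : Q.ncard ≤ Δ + 1 + k := by
  obtain ⟨X, hX, hdeg⟩ := h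
  have hQX : (Q \ X).ncard ≤ Δ + 1 := by
    rcases (Q \ X).eq_empty_or_nonempty with hempty | ⟨v, hv⟩
    · simp [hempty]
    have hsub : Q \ X ⊆ insert v {w | w ∉ X ∧ G.Adj v w} := fun w hw =>
      or_iff_not_imp_left.2 fun hwv => ⟨hw.2, hQ hv.1 hw.1 (Ne.symm hwv)⟩
    exact (Set.ncard_le_ncard hsub).trans
      ((Set.ncard_insert_le _ _).trans (Nat.succ_le_succ (hdeg v hv.2)))
  exact (Set.ncard_le_ncard_sdiff_add_ncard Q X).trans (add_le_add hQX hX)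

lemma IsPathList.length_lt {B : ℕ} {Y : Set V} (hl : IsPathList G l) (hY : Y.ncard ≤ a)
    (h : ∀ l', IsPathList G l' → (∀ x ∈ l', x ∉ Y) → l'.length < B) :
    l.length < (a + 1) * B := by
  rw [← hl.ncard_setOf_mem]
  refine lt_of_forall_infix_lt (fun v => (Set.ncard_singleton v).le) Set.ncard_union_le
    Y.toFinite hY hl.nodup fun l' hl' hdis => ?_
  rw [(hl.infix hl').ncard_setOf_mem]
  exact h l' (hl.infix hl') hdis

lemma AlmostEmbeddable.length_lt (h : AlmostEmbeddable H g p a k) (hGH : G ≤ H)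
    (hl : IsPathList G l) (hG : ¬ pathGraph m ⊴ G) :
    l.length < (a + 1) * 2 ^ (2 * m) ^ (cliqueMinorBound g p k + 1) := by
  obtain ⟨A, hA, hmodel⟩ := h.exists_card_cliqueModel_le
  refine hl.length_lt hA fun l' hl' hdis => ?_
  by_contra! hlen
  obtain ⟨U, hU, hUl⟩ := hl'.exists_isCliqueModel hG hlen
  have hcard := hmodel (hU.mono_graph hGH)
    fun i => Set.disjoint_left.2 fun x hx => hdis x (hUl i hx)
  simp at hcard

lemma AlmostBoundedDegree.length_lt (h : AlmostBoundedDegree H k Δ) (hGH : G ≤ H)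
    (hl : IsPathList G l) (hG : ¬ pathGraph m ⊴ G) :
    l.length < (k + 1) * ((Δ + 1) ^ m + 1) := by
  obtain ⟨X, hX, hdeg⟩ := h
  refine hl.length_lt hX fun l' hl' hdis => Nat.lt_succ_of_le ?_
  rw [← hl'.ncard_setOf_mem]
  refine (connectedOn_of_isChain hl'.isChain).ncard_le (fun v hv => ?_) hG
  refine (Set.ncard_le_ncard ?_).trans (hdeg v (hdis v hv))
  exact fun w hw => ⟨hdis w hw.1, hGH hw.2⟩

/-- The class `𝒢_k` of graphs from which the torsos are taken. -/
def IsBaseGraph {V : Type*} (G : SimpleGraph V) (k : ℕ) : Prop :=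
  AlmostEmbeddable G k k k k ∨ AlmostBoundedDegree G k k

/-- The order of a complete graph that an almost-embeddable graph of `𝒢_k` does not have as a minor
once its apices are deleted. -/
noncomputable def excludedCliqueOrder (k : ℕ) : ℕ := cliqueMinorBound k k k + 1

lemma IsBaseGraph.ncard_le_of_isClique (h : IsBaseGraph G k) (hQ : G.IsClique Q) :
    Q.ncard ≤ excludedCliqueOrder k + 2 * k := by
  rcases h with h | h
  · exact (h.ncard_le_of_isClique hQ).trans (by unfold excludedCliqueOrder; lia)
  · exact (h.ncard_le_of_isClique hQ).trans (by unfold excludedCliqueOrder; lia)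

lemma IsBaseGraph.length_lt (h : IsBaseGraph H k) (hGH : G ≤ H) (hl : IsPathList G l)
    (hG : ¬ pathGraph m ⊴ G) :
    l.length < 2 ^ ((2 * k + 1) * (2 * m) ^ excludedCliqueOrder k) := by
  have hm : 1 ≤ m := Nat.one_le_iff_ne_zero.2 fun h => hG (h ▸ .of_isEmpty)
  set M := (2 * m) ^ excludedCliqueOrder k
  have hM : 2 * m ≤ M := Nat.le_self_pow (Nat.succ_ne_zero _) _
  have hk : k + 1 ≤ 2 ^ k := Nat.lt_two_pow_self
  rcases h with h | h
  · calc l.length < (k + 1) * 2 ^ M := h.length_lt hGH hl hG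
      _ ≤ 2 ^ k * 2 ^ M := Nat.mul_le_mul_right _ hk
      _ = 2 ^ (k + M) := (pow_add _ _ _).symm
      _ ≤ 2 ^ ((2 * k + 1) * M) := Nat.pow_le_pow_right two_pos (by nlinarith)
  · have hpow : (k + 1) ^ m + 1 ≤ 2 ^ (k * m + 1) := by
      have := Nat.pow_le_pow_left hk m
      rw [← pow_mul] at this
      have := Nat.one_le_two_pow (n := k * m)
      rw [pow_succ]
      lia
    calc l.length < (k + 1) * ((k + 1) ^ m + 1) := h.length_lt hGH hl hG
      _ ≤ 2 ^ k * 2 ^ (k * m + 1) := Nat.mul_le_mul hk hpow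
      _ = 2 ^ (k + (k * m + 1)) := (pow_add _ _ _).symm
      _ ≤ 2 ^ ((2 * k + 1) * M) := Nat.pow_le_pow_right two_pos (by nlinarith)

end Base

section Bag

variable {V N : Type*} [Finite V] {G : SimpleGraph V} {T : SimpleGraph N} {R : TreeRep G T}
  {t t' : N} {k m : ℕ}

lemma ncard_bag_inter_bag_le (ht : IsBaseGraph (R.torso t) k) (h : T.Adj t t') :
    (R.bag t ∩ R.bag t').ncard ≤ excludedCliqueOrder k + 2 * k := by
  rw [← Subtype.image_preimage_coe, Set.ncard_image_of_injective _ Subtype.val_injective]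
  exact ht.ncard_le_of_isClique (R.isClique_torso h)

lemma ncard_bag_lt (hT : T.IsTree) (ht : IsBaseGraph (R.torso t) k) (hG : ¬ pathGraph m ⊴ G)
    {l : List V} (hl : IsPathList G l) (hmem : ∀ v, v ∈ l) :
    (R.bag t).ncard < 2 ^ ((2 * k + 1) * (2 * m) ^ excludedCliqueOrder k) := by
  obtain ⟨l', hl', hmem'⟩ := hl.exists_isPathList_shadow (R.bag t)
  have hlen : (R.bag t).ncard = l'.length := by
    rw [← hl'.ncard_setOf_mem, ← Nat.card_coe_set_eq, ← Set.ncard_univ]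
    congr 1
    ext x
    simp [hmem', hmem]
  rw [hlen]
  exact ht.length_lt (R.touchGraph_shadow_bag_le_torso hT t) hl'
    fun h => hG (pathGraph_isIndContained_of_touchGraph_shadow h)

end Bag

/-! ### Nested cuts along a path -/

section Cut

variable {V : Type*} {G : SimpleGraph V} {W : Set V} {f : V → ℕ}

/-- The vertices of `G[W]` at which the cut between the values `≤ i` and `> i` of the level
function `f` is crossed from below. -/
def levelBoundary (G : SimpleGraph V) (W : Set V) (f : V → ℕ) (i : ℕ) : Set V :=
  {v ∈ W | f v ≤ i ∧ ∃ w ∈ W, G.Adj v w ∧ i < f w}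

lemma levelBoundary_mono {W' : Set V} (h : W ⊆ W') (f : V → ℕ) (i : ℕ) :
    levelBoundary G W f i ⊆ levelBoundary G W' f i := fun _ ⟨hv, hvi, w, hw, hvw⟩ =>
  ⟨h hv, hvi, w, h hw, hvw⟩

lemma ReachableIn.exists_mem_levelBoundary {Q : Set V} {u w : V} {i : ℕ}
    (h : ReachableIn G Q u w) (hu : f u ≤ i) (hw : i < f w) :
    ∃ x ∈ Q, x ∈ levelBoundary G Q f i := by
  obtain ⟨x, hx, y, hy, hxy, hxi, hyi⟩ :=
    h.exists_adj_of_mem_of_notMem (P := {v | f v ≤ i}) hu (not_le.2 hw)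
  exact ⟨x, hx, hx, hxi, y, hy, hxy, not_le.1 hyi⟩

/-- A short path `Q` from the bottom level to the top level meets every level boundary, so deleting
`Q` lowers the bound `a` on the level boundaries. -/
lemma IsPathList.ncard_image_lt [Finite V] {l : List V} {m a : ℕ} (hl : IsPathList G l)
    (hG : ¬ pathGraph m ⊴ G) (h : ∀ i, (levelBoundary G {x | x ∈ l} f i).ncard ≤ a) :
    (f '' {x | x ∈ l}).ncard < 2 * (m + 1) ^ a := by
  have hconn := connectedOn_of_isChain hl.isChain
  induction a generalizing l with
  | zero =>
    suffices hle : ∀ u ∈ l, ∀ w ∈ l, f w ≤ f u by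
      refine Nat.lt_succ_of_le ((Set.ncard_le_one).2 ?_)
      rintro _ ⟨u, hu, rfl⟩ _ ⟨w, hw, rfl⟩
      exact le_antisymm (hle w hw u hu) (hle u hu w hw)
    intro u hu w hw
    by_contra! hlt
    obtain ⟨x, -, hx⟩ := (hconn u hu w hw).exists_mem_levelBoundary le_rfl hlt
    exact ((Set.ncard_pos).2 ⟨x, hx⟩).not_ge (h (f u))
  | succ a ih =>
    rcases Set.eq_empty_or_nonempty {x | x ∈ l} with hempty | hne
    · simp [hempty]
    obtain ⟨u, hu, hmin⟩ := Set.exists_min_image {x | x ∈ l} f (Set.toFinite _) hne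
    obtain ⟨w, hw, hmax⟩ := Set.exists_max_image {x | x ∈ l} f (Set.toFinite _) hne
    obtain ⟨Q, hQl, hQ, huw⟩ := hconn.exists_reachableIn_ncard_le hG hu hw
    rw [pow_succ', Nat.mul_left_comm]
    refine lt_of_forall_infix_lt (μ := fun A => (f '' A).ncard) (by simp)
      (fun A B => by rw [Set.image_union]; exact Set.ncard_union_le _ _) Q.toFinite hQ hl.nodup
      fun l' hl' hdis =>
        ih (hl.infix hl') (fun i => ?_) (connectedOn_of_isChain (hl.infix hl').isChain)
    have hsub : {x | x ∈ l'} ⊆ {x | x ∈ l} := fun _ hx => hl'.subset hx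
    by_cases hi : f u ≤ i ∧ i < f w
    · obtain ⟨x, hxQ, hx⟩ := huw.exists_mem_levelBoundary hi.1 hi.2
      have hss : levelBoundary G {x | x ∈ l'} f i ⊂ levelBoundary G {x | x ∈ l} f i :=
        ⟨levelBoundary_mono hsub f i, fun hsup =>
          hdis x (hsup (levelBoundary_mono hQl f i hx)).1 hxQ⟩
      exact Nat.le_of_lt_succ ((Set.ncard_lt_ncard hss).trans_le (h i))
    · have hempty : levelBoundary G {x | x ∈ l'} f i = ∅ := by
        refine Set.eq_empty_of_forall_notMem fun v ⟨hv, hvi, z, hz, _, hzi⟩ => hi ?_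
        exact ⟨(hmin v (hsub hv)).trans hvi, hzi.trans_le (hmax z (hsub hz))⟩
      simp [hempty]

end Cut

section Order

variable {V N : Type*} [Finite V] {G : SimpleGraph V} {T : SimpleGraph N} {t t' : N} {l : List V}
  {B a k m : ℕ}

lemma TreeRep.exists_ncard_lt_ncard_inter_behind (hT : T.IsTree) (R : TreeRep G T)
    (hl : IsPathList G l) (hmem : ∀ v, v ∈ l) (hB : (R.bag t).ncard < B) {Z : Set V}
    (hZ : B ≤ Z.ncard) :
    ∃ t', T.Adj t t' ∧ Z.ncard < 2 * B * (Z ∩ R.behind t t').ncard := by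
  by_contra! hcon
  set q := Z.ncard / (2 * B)
  have hq (t') (h : T.Adj t t') : (Z ∩ R.behind t t').ncard ≤ q :=
    (Nat.le_div_iff_mul_le (by lia)).2 (Nat.mul_comm _ _ ▸ hcon t' h)
  have hlt : (Z ∩ {x | x ∈ l}).ncard < (B - 1 + 1) * (q + 1) := by
    refine lt_of_forall_infix_lt (μ := fun A => (Z ∩ A).ncard) (fun v => ?_) (fun A B => ?_)
      (R.bag t).toFinite (Nat.le_sub_one_of_lt hB) hl.nodup fun l' hl' hdis => Nat.lt_succ_of_le ?_
    · exact (Set.ncard_le_ncard Set.inter_subset_right).trans (Set.ncard_singleton v).le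
    · rw [Set.inter_union_distrib_left]
      exact Set.ncard_union_le _ _
    rcases l' with _ | ⟨v, l'⟩
    · simp
    obtain ⟨t', h, ht'⟩ := R.exists_forall_reachableIn_mem_behind hT (hdis v List.mem_cons_self)
    have hconn := connectedOn_of_isChain (hl.infix hl').isChain
    exact (Set.ncard_le_ncard (Set.inter_subset_inter_right Z fun x hx =>
      ht' x ((hconn v List.mem_cons_self x hx).mono hdis))).trans (hq t' h)
  have hset : Z ∩ {x | x ∈ l} = Z := Set.inter_eq_left.2 fun x _ => hmem x
  have hdiv : 2 * B * q ≤ Z.ncard := Nat.mul_div_le _ _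
  rw [hset, Nat.sub_add_cancel (by lia)] at hlt
  rcases q.eq_zero_or_pos with hq0 | hq0
  · rw [hq0] at hlt
    lia
  · nlinarith

lemma TreeRep.exists_behind_ssubset [Finite N] (hT : T.IsTree) (R : TreeRep G T)
    (hl : IsPathList G l) (hmem : ∀ v, v ∈ l) (hB : ∀ t, (R.bag t).ncard < B) (h : T.Adj t t')
    (ht : B ≤ (R.behind t t').ncard) :
    ∃ s s', T.Adj s s' ∧ R.behind s s' ⊂ R.behind t t' ∧
      (R.behind t t').ncard < 2 * B * (R.behind s s').ncard := by
  induction hn : (branch T t t').ncard using Nat.strong_induction_on generalizing t t' with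
  | _ n ih =>
    subst hn
    obtain ⟨t'', h', hlt⟩ := R.exists_ncard_lt_ncard_inter_behind hT hl hmem (hB t') ht
    have hne : t'' ≠ t := by
      rintro rfl
      simp [(R.disjoint_behind hT.isAcyclic h).inter_eq] at hlt
    have hsub := R.behind_subset_behind hT.isAcyclic h h' hne
    rw [Set.inter_eq_right.2 hsub] at hlt
    rcases hsub.eq_or_ssubset with heq | hss
    · rw [← heq] at ht ⊢
      have hbranch : branch T t' t'' ⊂ branch T t t' :=
        ⟨branch_subset_branch hT.isAcyclic h h' hne,
          fun hss => notMem_branch h' (hss (self_mem_branch T t t'))⟩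
      exact ih _ (Set.ncard_lt_ncard hbranch) h' ht rfl
    · exact ⟨t', t'', h', hss, hlt⟩

lemma exists_level_succ {Y : Set V} {f : V → ℕ} (hf : ∀ v, 0 < f v → v ∈ Y)
    (hY : {v | v ∉ Y ∧ ∃ w ∈ Y, G.Adj w v}.ncard ≤ a)
    (h : ∀ i, (levelBoundary G Set.univ f i).ncard ≤ a) :
    ∃ g : V → ℕ, (∀ v, 0 < g v ↔ v ∈ Y) ∧ (∀ v ∈ Y, g v = f v + 1) ∧
      ∀ i, (levelBoundary G Set.univ g i).ncard ≤ a := by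
  classical
  let g (v : V) : ℕ := if v ∈ Y then f v + 1 else 0
  have hgY {v} (hv : v ∈ Y) : g v = f v + 1 := if_pos hv
  have hg (v) : 0 < g v ↔ v ∈ Y := by
    by_cases hv : v ∈ Y <;> simp [g, hv]
  refine ⟨g, hg, fun v => hgY, fun i => ?_⟩
  cases i with
  | zero =>
    refine (Set.ncard_le_ncard fun v hv => ?_).trans hY
    obtain ⟨_, hv, w, _, hvw, hw⟩ := hv
    exact ⟨fun hvY => hv.not_gt ((hg v).2 hvY), w, (hg w).1 hw, hvw.symm⟩
  | succ i =>
    refine (Set.ncard_le_ncard fun v hv => ?_).trans (h i)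
    obtain ⟨_, hv, w, _, hvw, hw⟩ := hv
    have hwY := (hg w).1 (Nat.zero_lt_of_lt hw)
    rw [hgY hwY] at hw
    refine ⟨trivial, ?_, w, trivial, hvw, Nat.lt_of_succ_lt_succ hw⟩
    by_cases hvY : v ∈ Y
    · exact Nat.le_of_succ_le_succ ((hgY hvY).ge.trans hv)
    · exact (Nat.eq_zero_of_not_pos fun hpos => hvY (hf v hpos)).trans_le (Nat.zero_le i)

/-- The level function counts in how many members of a chain of nested sets `R.behind s s'` a
vertex lies. -/
lemma TreeRep.exists_level [Finite N] (hT : T.IsTree) (R : TreeRep G T) (hl : IsPathList G l)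
    (hmem : ∀ v, v ∈ l) (hB : ∀ t, (R.bag t).ncard < B)
    (ha : ∀ t t', T.Adj t t' → (R.bag t ∩ R.bag t').ncard ≤ a) {M : ℕ} (h : T.Adj t t')
    (hM : (2 * B) ^ M ≤ (R.behind t t').ncard) :
    ∃ f : V → ℕ, (∀ v, 0 < f v ↔ v ∈ R.behind t t') ∧
      (∀ i, (levelBoundary G Set.univ f i).ncard ≤ a) ∧ Set.Icc 1 (M + 1) ⊆ Set.range f := by
  have hbdry {t t'} (h : T.Adj t t') :
      {v | v ∉ R.behind t t' ∧ ∃ w ∈ R.behind t t', G.Adj w v}.ncard ≤ a :=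
    le_trans (Set.ncard_le_ncard (by
      rintro v ⟨hv, w, hw, hwv⟩
      exact R.mem_bag_inter_bag_of_adj_behind hT.isAcyclic h hw hv hwv)) (ha t t' h)
  induction M generalizing t t' with
  | zero =>
    obtain ⟨v, hv⟩ := (Set.ncard_pos).1 (Nat.lt_of_succ_le hM)
    obtain ⟨f, hf, hfv, hfa⟩ := exists_level_succ (f := fun _ => 0)
      (fun _ h => absurd h (lt_irrefl 0)) (hbdry h) (fun i => by simp [levelBoundary])
    refine ⟨f, hf, hfa, fun j hj => ⟨v, ?_⟩⟩
    rw [hfv v hv]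
    exact le_antisymm hj.1 hj.2
  | succ M ih =>
    have hBpos : 0 < B := Nat.zero_lt_of_lt (hB t)
    have hpow : 0 < (2 * B) ^ M := by positivity
    rw [pow_succ'] at hM
    obtain ⟨s, s', hs, hss, hlt⟩ := R.exists_behind_ssubset hT hl hmem hB h (by nlinarith)
    obtain ⟨f, hf, hfa, hfM⟩ := ih hs (Nat.le_of_mul_le_mul_left (hM.trans hlt.le) (by lia))
    obtain ⟨g, hg, hgf, hga⟩ :=
      exists_level_succ (fun v hv => hss.subset ((hf v).1 hv)) (hbdry h) hfa
    refine ⟨g, hg, hga, fun j hj => ?_⟩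
    rcases hj.1.eq_or_lt' with rfl | hj1
    · obtain ⟨v, hv, hvs⟩ := Set.exists_of_ssubset hss
      exact ⟨v, (hgf v hv).trans (by simpa using (hf v).not.2 hvs)⟩
    · have := hj.2
      obtain ⟨v, hv⟩ := hfM (show j - 1 ∈ Set.Icc 1 (M + 1) from ⟨by lia, by lia⟩)
      exact ⟨v, by rw [hgf v (hss.subset ((hf v).1 (by lia)))]; lia⟩

lemma TreeRep.card_lt [Finite N] (hT : T.IsTree) (R : TreeRep G T) (hl : IsPathList G l)
    (hmem : ∀ v, v ∈ l) (hB : ∀ t, (R.bag t).ncard < B)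
    (ha : ∀ t t', T.Adj t t' → (R.bag t ∩ R.bag t').ncard ≤ a) (hG : ¬ pathGraph m ⊴ G) :
    Nat.card V < (2 * B) ^ (2 * (m + 1) ^ a) := by
  by_contra! hcard
  obtain ⟨t⟩ := hT.connected.nonempty
  have hBpos : 0 < B := Nat.zero_lt_of_lt (hB t)
  obtain ⟨M, hM⟩ : ∃ M, 2 * (m + 1) ^ a = M + 1 :=
    Nat.exists_eq_succ_of_ne_zero (by positivity)
  have hpow : 0 < (2 * B) ^ M := by positivity
  rw [hM, pow_succ', ← Set.ncard_univ] at hcard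
  obtain ⟨t', h, hlt⟩ := R.exists_ncard_lt_ncard_inter_behind hT hl hmem (hB t)
    (Z := Set.univ) (by nlinarith)
  rw [Set.univ_inter] at hlt
  obtain ⟨f, -, hfa, hfM⟩ := R.exists_level hT hl hmem hB ha h
    (Nat.le_of_mul_le_mul_left (hcard.trans hlt.le) (by lia))
  have hlset : {x | x ∈ l} = Set.univ := Set.eq_univ_of_forall hmem
  have himage := hl.ncard_image_lt hG (hlset ▸ hfa)
  rw [hlset, Set.image_univ, hM] at himage
  have := Set.ncard_le_ncard hfM (Set.finite_range f)
  rw [← Finset.coe_Icc, Set.ncard_coe_finset, Nat.card_Icc] at this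
  lia

lemma card_lt_of_isBaseGraph_torso [Finite N] (hT : T.IsTree) (R : TreeRep G T)
    (hR : ∀ t, IsBaseGraph (R.torso t) k) (hham : HasHamPath G) (hG : ¬ pathGraph m ⊴ G) :
    Nat.card V < 2 ^ (4 * (k + 1) * (2 * m) ^ (2 * (excludedCliqueOrder k + k))) := by
  obtain ⟨u, v, p, hp, hmem⟩ := hham
  have hl : IsPathList G p.support := ⟨hp.support_nodup, p.isChain_adj_support⟩
  have hm : 1 ≤ m := Nat.one_le_iff_ne_zero.2 fun h => hG (h ▸ .of_isEmpty)
  set e := excludedCliqueOrder k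
  set a := e + 2 * k
  have hM : 1 ≤ (2 * m) ^ e := Nat.one_le_pow _ _ (by lia)
  calc Nat.card V < (2 * 2 ^ ((2 * k + 1) * (2 * m) ^ e)) ^ (2 * (m + 1) ^ a) :=
        R.card_lt hT hl hmem (fun t => ncard_bag_lt hT (hR t) hG hl hmem)
          (fun t _ h => ncard_bag_inter_bag_le (hR t) h) hG
    _ = 2 ^ (((2 * k + 1) * (2 * m) ^ e + 1) * (2 * (m + 1) ^ a)) := by
        rw [← pow_succ', ← pow_mul]
    _ ≤ 2 ^ (2 * (k + 1) * (2 * m) ^ e * (2 * (2 * m) ^ a)) := by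
        gcongr
        · exact one_le_two
        · nlinarith
        · lia
    _ = 2 ^ (4 * (k + 1) * (2 * m) ^ (2 * (e + k))) := by
        congr 1
        ring

end Order

lemma exists_pathGraph_isIndContained_and_not {V : Type*} [Finite V] [Nonempty V]
    (G : SimpleGraph V) : ∃ m, 1 ≤ m ∧ pathGraph m ⊴ G ∧ ¬ pathGraph (m + 1) ⊴ G := by
  have hone : pathGraph 1 ⊴ G :=
    ⟨⟨⟨fun _ => Classical.arbitrary V, Function.injective_of_subsingleton _⟩, by simp⟩⟩
  have hex : ∃ m, ¬ pathGraph (m + 1) ⊴ G := ⟨Nat.card V, fun ⟨f⟩ => by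
    have := Nat.card_le_card_of_injective f f.injective
    simp at this⟩
  obtain ⟨m, hm, hm'⟩ := Nat.exists_not_and_succ_of_not_zero_of_exists (not_not.2 hone) hex
  exact ⟨m + 1, Nat.succ_pos m, not_not.1 hm, hm'⟩

lemma inv_mul_logb_rpow_le {C E m n : ℕ} (hC : C ≠ 0) (hE : E ≠ 0) (hn : n ≠ 0)
    (h : n < 2 ^ (C * (4 * m) ^ E)) :
    (4 * (C : ℝ) ^ (E : ℝ)⁻¹)⁻¹ * logb 2 n ^ (E : ℝ)⁻¹ ≤ m := by
  have hn1 : (1 : ℝ) ≤ n := by exact_mod_cast Nat.one_le_iff_ne_zero.2 hn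
  have hlog : logb 2 n ≤ C * (4 * m) ^ E := by
    rw [logb_le_iff_le_rpow one_lt_two (by positivity)]
    exact_mod_cast h.le
  rw [inv_mul_le_iff₀ (by positivity)]
  calc logb 2 n ^ (E : ℝ)⁻¹ ≤ (C * (4 * m) ^ E) ^ (E : ℝ)⁻¹ :=
        rpow_le_rpow (logb_nonneg one_lt_two hn1) hlog (by positivity)
    _ = C ^ (E : ℝ)⁻¹ * (4 * m) := by
        rw [mul_rpow (by positivity) (by positivity), pow_rpow_inv_natCast (by positivity) hE]
    _ = 4 * C ^ (E : ℝ)⁻¹ * m := by ring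

theorem stmt19 (k : ℕ) :
    ∃ c d : ℝ, 0 < c ∧ 0 < d ∧ d < 1 ∧
      ∀ {V : Type} [Fintype V] (G : SimpleGraph V) (n : ℕ),
        (∃ (N : Type) (_ : Fintype N) (T : SimpleGraph N) (_ : T.IsTree) (R : TreeRep G T),
          ∀ t ,
            AlmostEmbeddable (R.torso t) k k k k ∨ AlmostBoundedDegree (R.torso t) k k) →
        HasHamPath G → Fintype.card V = n →
        HasInducedPathGE G (c * Real.logb 2 n ^ d) := by
  set E := 2 * (excludedCliqueOrder k + k) with hE
  have hE1 : 1 < E := by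
    unfold excludedCliqueOrder at hE
    lia
  refine ⟨(4 * ((4 * (k + 1) : ℕ) : ℝ) ^ (E : ℝ)⁻¹)⁻¹, (E : ℝ)⁻¹, by positivity, by positivity,
    inv_lt_one_of_one_lt₀ (by exact_mod_cast hE1), ?_⟩
  rintro V _ G n ⟨N, _, T, hT, R, hR⟩ hham rfl
  have : Nonempty V := ⟨hham.choose⟩
  obtain ⟨m, hm, hpath, hG⟩ := exists_pathGraph_isIndContained_and_not G
  have hcard := card_lt_of_isBaseGraph_torso hT R hR hham hG
  refine ⟨m, inv_mul_logb_rpow_le (by lia) (by lia) Fintype.card_ne_zero ?_, hpath⟩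
  calc Fintype.card V < 2 ^ (4 * (k + 1) * (2 * (m + 1)) ^ E) := by
        rwa [← Nat.card_eq_fintype_card]
    _ ≤ 2 ^ (4 * (k + 1) * (4 * m) ^ E) := Nat.pow_le_pow_right two_pos
        (Nat.mul_le_mul_left _ (Nat.pow_le_pow_left (by lia) E))
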